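/- arXiv:1904.01407 — 2 statements merged into one kernel-verified Lean document; each statement's English description precedes it below -/
import Mathlib

section
/- Let 𝒜 be a class of linearly ordered FL_ew-algebras, each weakly-archimedean, such that for every n ∈ ℕ there is an algebra A_n ∈ 𝒜 that is not n-contractive. Then the problem of determining, given finite sets Γ ∪ {φ} of modal formulas, whether φ follows locally from Γ over the class of transitive safe 𝒜-Kripke models is undecidable; moreover, the same problem over the class of finite transitive 𝒜-Kripke models is undecidable, and already the three-variable fragments of both local consequence relations are undecidable. -/
/-!
The proof reduces a halting problem to the complement of local consequence.

*From machines to arithmetic.* Some partial recursive `g` has an undecidable set of `m` with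
`g (2 ^ m)` defined, and Mathlib compiles `g` to a one-tape machine with finitely many states and
symbols (`exists_tm0`). A configuration is written as a word read circularly, and a finite set of
rules `(u, u')` acts on such words as on a queue: remove `u` at the front, append `u'` at the end.
The rules simulate the machine and allow the word to be emptied only after halting, so halting from
a start word `x` means that some sequence of rules satisfies `x u'₁ … u'ₖ = u₁ … uₖ`
(`dom_iff_qSol`). Reading words as numbers in a fixed base turns concatenation into affine maps:
with `Reach` the set of pairs generated from `(0, 0)` by the maps
`(V, W) ↦ (a * V + b, c * W + d)` of a fixed finite list, it is undecidable in `m` whether some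
reachable pair has `V = d m + S m * W` (`exists_arith`).

*From arithmetic to modal logic.* The premises say that `y` has one value `c` on all successors of
the root (`□y ↔ ◇y`), that at each successor `v` and `w` arise from `□v`, `□w` by one of the affine
maps acting on exponents of `c`, and that `□(v · w) → □v · □w` holds. The conclusion says that
if `□v` equals `(□w) ^ S * c ^ d` then `b = □v · □w` absorbs `c`.

If it fails at a root, then `b * c ≠ b`, so weak archimedeanity gives `N` with `b ≰ c ^ N`. This
bounds the exponents occurring below the root, so induction on a bound for the exponent of `v`
replaces well-foundedness of the model, and shows that every successor has `v = c ^ V`, `w = c ^ W`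
with `(V, W)` reachable. At the induction step a successor with `V + W` maximal realises both
infima `□v` and `□w` at once; this is what the splitting premise is for (`box_values`). The
failing conclusion forces `V = d + S * W` at the root (`reach_of_countermodel`).
Conversely a reachable pair is realised on a finite strict chain, with `c` an element of an algebra
that is not `(V + W)`-contractive, and there `b * c ≠ b` (`exists_countermodel`). Only three
variables occur, and the chain model is finite and transitive, so one reduction serves all four
problems.
-/

/-- An FL_ew-algebra: a bounded lattice with a commutative monoid structure whose unit is the
top element, together with a residuum `himp` satisfying the residuation law. -/
class FLew (α : Type) extends Lattice α, BoundedOrder α, CommMonoid α where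
  himp : α → α → α
  mul_le_iff_le_himp : ∀ {a b c : α}, a * b ≤ c ↔ a ≤ himp b c
  one_eq_top : (1 : α) = ⊤

namespace FLew

/-- The lattice order is linear. -/
def isChain (α : Type) [FLew α] : Prop := ∀ a b : α, a ≤ b ∨ b ≤ a

/-- Weakly archimedean: if `a ≤ bⁿ` for all `n` then `a * b = a`. -/
def weaklyArchimedean (α : Type) [FLew α] : Prop :=
  ∀ a b : α, (∀ n : ℕ, a ≤ b ^ n) → a * b = a

/-- `n`-contractive: `a^(n+1) = aⁿ` for every `a`. -/
def contractive (α : Type) [FLew α] (n : ℕ) : Prop :=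
  ∀ a : α, a ^ (n + 1) = a ^ n

end FLew

/-- Modal formulas over a set `V` of propositional variables. -/
inductive MFormula (V : Type) : Type
  | var : V → MFormula V
  | fZero : MFormula V
  | fOne : MFormula V
  | fAnd : MFormula V → MFormula V → MFormula V
  | fOr : MFormula V → MFormula V → MFormula V
  | fMul : MFormula V → MFormula V → MFormula V
  | fImp : MFormula V → MFormula V → MFormula V
  | fBox : MFormula V → MFormula V
  | fDia : MFormula V → MFormula V
  deriving DecidableEq

namespace MFormula

variable {V : Type}

def fNeg (φ : MFormula V) : MFormula V := .fImp φ .fZero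

def fIff (φ ψ : MFormula V) : MFormula V := .fMul (.fImp φ ψ) (.fImp ψ φ)

def fPow (φ : MFormula V) : ℕ → MFormula V
  | 0 => .fOne
  | n + 1 => .fMul (fPow φ n) φ

def bigOr : List (MFormula V) → MFormula V
  | [] => .fZero
  | φ :: l => .fOr φ (bigOr l)

def map {V' : Type} (f : V → V') : MFormula V → MFormula V'
  | .var x => .var (f x)
  | .fZero => .fZero
  | .fOne => .fOne
  | .fAnd φ ψ => .fAnd (map f φ) (map f ψ)
  | .fOr φ ψ => .fOr (map f φ) (map f ψ)
  | .fMul φ ψ => .fMul (map f φ) (map f ψ)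
  | .fImp φ ψ => .fImp (map f φ) (map f ψ)
  | .fBox φ => .fBox (map f φ)
  | .fDia φ => .fDia (map f φ)

end MFormula

/-- A (safe) Kripke model over an FL_ew-algebra `α`: the evaluation `e` is world-wise a
homomorphism on the propositional connectives and interprets `□`/`◇` as the infimum/supremum
of the values at the accessible worlds (which are required to exist: safety). -/
structure KModel (α : Type) [FLew α] (V : Type) where
  W : Type
  nonempty : Nonempty W
  R : W → W → Prop
  e : W → MFormula V → α
  e_zero : ∀ v, e v .fZero = ⊥
  e_one : ∀ v, e v .fOne = 1
  e_and : ∀ v φ ψ, e v (.fAnd φ ψ) = e v φ ⊓ e v ψ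
  e_or : ∀ v φ ψ, e v (.fOr φ ψ) = e v φ ⊔ e v ψ
  e_mul : ∀ v φ ψ, e v (.fMul φ ψ) = e v φ * e v ψ
  e_imp : ∀ v φ ψ, e v (.fImp φ ψ) = FLew.himp (e v φ) (e v ψ)
  e_box : ∀ v φ, IsGLB {a | ∃ w, R v w ∧ e w φ = a} (e v (.fBox φ))
  e_dia : ∀ v φ, IsLUB {a | ∃ w, R v w ∧ e w φ = a} (e v (.fDia φ))

namespace KModel

variable {α V : Type} [FLew α]

/-- The accessibility relation is transitive. -/
def IsTrans (M : KModel α V) : Prop := ∀ a b c : M.W, M.R a b → M.R b c → M.R a c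

/-- The model is finite. -/
def IsFinite (M : KModel α V) : Prop := Finite M.W

/-- The depth of world `w` is at most `k`: every `R`-chain starting at `w` has length `≤ k`. -/
def DepthLE (M : KModel α V) (w : M.W) (k : ℕ) : Prop :=
  ∀ (n : ℕ) (c : Fin (n + 1) → M.W), c 0 = w →
    (∀ i : Fin n, M.R (c i.castSucc) (c i.succ)) → n ≤ k

/-- World `w` has finite depth. -/
def FiniteDepth (M : KModel α V) (w : M.W) : Prop := ∃ k, M.DepthLE w k

end KModel

/-- Local consequence over the models (over the algebras `A i`) satisfying the class
condition `C`. -/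
def LocalConsequence {I : Type} (A : I → Type) [∀ i, FLew (A i)] {V : Type}
    (C : ∀ i, KModel (A i) V → Prop) (Γ : List (MFormula V)) (φ : MFormula V) : Prop :=
  ∀ (i : I) (M : KModel (A i) V), C i M → ∀ v : M.W,
    (∀ γ ∈ Γ, M.e v γ = 1) → M.e v φ = 1

/-- Number of digits of `y` in base `s` (a number always has at least one digit). -/
def numDigits (s y : ℕ) : ℕ := if y = 0 then 1 else (Nat.digits s y).length

/-- Concatenation of the numbers `x` and `y` in base `s`. -/
def concat2 (s x y : ℕ) : ℕ := x * s ^ numDigits s y + y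

/-- Concatenation of a list of numbers in base `s`. -/
def concatList (s : ℕ) (l : List ℕ) : ℕ := l.foldl (concat2 s) 0

/-- An instance of the Post Correspondence Problem: a list of pairs of numbers in base
`s ≥ 2`, without repeated pairs. -/
structure PCPInstance where
  s : ℕ
  hs : 2 ≤ s
  m : ℕ
  v : Fin m → ℕ
  w : Fin m → ℕ
  norep : ∀ i j : Fin m, i ≠ j → v i ≠ v j ∨ w i ≠ w j

/-- A solution of a PCP instance: a nonempty sequence of indices along which the
`v`-concatenation equals the `w`-concatenation. -/
def PCPInstance.HasSolution (P : PCPInstance) : Prop :=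
  ∃ l : List (Fin P.m), l ≠ [] ∧
    concatList P.s (l.map fun i => P.v i) = concatList P.s (l.map fun i => P.w i)

/-- The three variables `y`, `v`, `w` of the reduction. -/
def yv : MFormula (Fin 3) := .var 0
def vv : MFormula (Fin 3) := .var 1
def wv : MFormula (Fin 3) := .var 2

/-- Formula (1) of `Γ_P`: `□y ↔ ◇y`. -/
def gamma1 : MFormula (Fin 3) := MFormula.fIff (.fBox yv) (.fDia yv)

/-- Formula (2) of `Γ_P`. -/
def gamma2 (P : PCPInstance) : MFormula (Fin 3) :=
  .fBox (MFormula.bigOr ((List.finRange P.m).map fun i =>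
    .fAnd
      (MFormula.fIff vv (.fMul (MFormula.fPow (.fBox vv) (P.s ^ numDigits P.s (P.v i)))
        (MFormula.fPow yv (P.v i))))
      (MFormula.fIff wv (.fMul (MFormula.fPow (.fBox wv) (P.s ^ numDigits P.s (P.w i)))
        (MFormula.fPow yv (P.w i))))))

/-- Formula (3) of `Γ_P`: `□(□(v·w) → □v·□w)`. -/
def gamma3 : MFormula (Fin 3) :=
  .fBox (.fImp (.fBox (.fMul vv wv)) (.fMul (.fBox vv) (.fBox wv)))

def GammaP (P : PCPInstance) : List (MFormula (Fin 3)) := [gamma1, gamma2 P, gamma3]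

/-- `φ_P = (v↔w) → (y ∨ (v·w → v·w·y))`. -/
def phiP (_P : PCPInstance) : MFormula (Fin 3) :=
  .fImp (MFormula.fIff vv wv) (.fOr yv (.fImp (.fMul vv wv) (.fMul (.fMul vv wv) yv)))


/-- A numerical code for modal formulas over variables `ℕ`. -/
def code : MFormula ℕ → ℕ
  | .var n => Nat.pair 0 n
  | .fZero => Nat.pair 1 0
  | .fOne => Nat.pair 2 0
  | .fAnd φ ψ => Nat.pair 3 (Nat.pair (code φ) (code ψ))
  | .fOr φ ψ => Nat.pair 4 (Nat.pair (code φ) (code ψ))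
  | .fMul φ ψ => Nat.pair 5 (Nat.pair (code φ) (code ψ))
  | .fImp φ ψ => Nat.pair 6 (Nat.pair (code φ) (code ψ))
  | .fBox φ => Nat.pair 7 (code φ)
  | .fDia φ => Nat.pair 8 (code φ)

/-- Code of a pair (finite premise set, conclusion) of modal formulas over `ℕ`. -/
def codePair (Γ : List (MFormula ℕ)) (φ : MFormula ℕ) : ℕ :=
  Nat.pair (Encodable.encode (Γ.map code)) (code φ)

/-- Code of a pair (finite premise set, conclusion) of three-variable modal formulas. -/
def codePair3 (Γ : List (MFormula (Fin 3))) (φ : MFormula (Fin 3)) : ℕ :=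
  Nat.pair (Encodable.encode (Γ.map fun γ => code (γ.map Fin.val)))
    (code (φ.map Fin.val))

/-! ### A one-tape machine with undecidable halting problem -/

section Machines

open Turing

/-- A machine supported on a finite set of states halts on the same inputs as a machine whose
state type is finite. -/
theorem tm0_restrict {Γ Λ : Type} [Inhabited Γ] [Inhabited Λ] (M : TM0.Machine Γ Λ) (S : Finset Λ)
    (ss : TM0.Supports M (S : Set Λ)) :
    ∃ (Λ' : Type) (_ : Fintype Λ') (_ : Inhabited Λ') (M' : TM0.Machine Γ Λ'), ∀ l,
      (StateTransition.eval (TM0.step M') (TM0.init l)).Dom ↔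
        (StateTransition.eval (TM0.step M) (TM0.init l)).Dom := by
  let i : Inhabited {q // q ∈ S} := ⟨⟨default, ss.1⟩⟩
  let M' : TM0.Machine Γ {q // q ∈ S} := fun q a =>
    (M q.1 a).attach.map fun p => (⟨p.1.1, ss.2 (s := p.1.2) p.2 q.2⟩, p.1.2)
  refine ⟨{q // q ∈ S}, inferInstance, i, M', fun l => ?_⟩
  have key : StateTransition.Respects (TM0.step M') (TM0.step M)
      (fun c d => (⟨c.q.1, c.Tape⟩ : TM0.Cfg Γ Λ) = d) := by
    refine StateTransition.fun_respects.2 ?_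
    rintro ⟨q, T⟩
    rcases hc : M q.1 T.head with _ | ⟨q', s⟩
    · have h1 : M' q T.head = none := by simp [M', hc]
      simp [TM0.step, h1, hc, StateTransition.FRespects]
    · have h1 : M' q T.head = some (⟨q', ss.2 hc q.2⟩, s) := by
        simp only [M', Option.map_eq_some_iff]
        exact ⟨⟨(q', s), hc⟩, by simpa using hc, rfl⟩
      simp only [TM0.step, h1, StateTransition.FRespects, Option.map_some]
      exact Relation.TransGen.single (by simp [TM0.step, hc])
  exact (StateTransition.tr_eval_dom key (a₂ := TM0.init l) rfl).symm

/-- A finitely supported multi-stack machine, with input on one stack, halts on the same inputs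
as a one-tape machine with finitely many states: Mathlib's `TM2 → TM1 → TM0` translations followed
by `tm0_restrict`. -/
theorem tm2_to_tm0 {K : Type} [DecidableEq K] {Γ : K → Type}
    {Λ σ : Type} [Inhabited Λ] [Inhabited σ] [Fintype σ]
    (M : Λ → TM2.Stmt Γ Λ σ) (S : Finset Λ) (ss : TM2.Supports M S) (k : K) :
    ∃ (Λ' : Type) (_ : Fintype Λ') (_ : Inhabited Λ') (M' : TM0.Machine (TM2to1.Γ' K Γ) Λ'),
      ∀ L, (StateTransition.eval (TM0.step M') (TM0.init (TM2to1.trInit k L))).Dom ↔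
        (StateTransition.eval (TM2.step M) (TM2.init k L)).Dom := by
  obtain ⟨Λ', h1, h2, M', h⟩ := tm0_restrict (TM1to0.tr (TM2to1.tr M)) _
    (TM1to0.tr_supports _ (TM2to1.tr_supports M ss))
  refine ⟨Λ', h1, h2, M', fun L => (h _).trans ?_⟩
  have e1 := TM1to0.tr_eval (TM2to1.tr M) (TM2to1.trInit k L)
  have e2 := TM2to1.tr_eval_dom M k L
  rw [← e1] at e2
  exact e2

/-- A partial recursive function with undecidable domain on powers of two. Inputs of the form
`2 ^ m` are used because their binary tape encoding is a block of `m` equal symbols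
(`trNat_two_pow`), which keeps the start words of the reduction uniform in `m`. -/
theorem exists_partrec : ∃ g : ℕ →. ℕ, Partrec g ∧ ¬ ComputablePred fun m : ℕ => (g (2 ^ m)).Dom := by
  have hpow : Primrec fun m : ℕ => 2 ^ m := by
    refine (Primrec.nat_rec₁ (f := fun _ a => a * 2) 1 ?_).of_eq fun n => ?_
    · exact Primrec.nat_mul.comp Primrec.snd (Primrec.const 2)
    · induction n with
      | zero => rfl
      | succ n ih => simp [pow_succ, ih]
  -- the partial logarithm: `x ↦ m` when `x = 2 ^ m`, undefined otherwise
  have hν : Partrec fun x : ℕ => Nat.rfind fun m => Part.some (decide (2 ^ m = x)) := by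
    refine Partrec.rfind ?_
    have : PrimrecPred fun p : ℕ × ℕ => 2 ^ p.2 = p.1 :=
      Primrec.eq.comp (hpow.comp Primrec.snd) Primrec.fst
    obtain ⟨_, h⟩ := this
    refine (Computable.of_eq h.to_comp ?_)
    intro p; simp
  have hU : Partrec fun m : ℕ => (Denumerable.ofNat Nat.Partrec.Code m).eval 0 :=
    Nat.Partrec.Code.eval_part.comp (Computable.ofNat _) (Computable.const 0)
  refine ⟨_, hν.bind (hU.comp Computable.snd).to₂, fun h => ?_⟩
  refine ComputablePred.halting_problem 0 ?_
  have h2 : ComputablePred fun m : ℕ => ((Denumerable.ofNat Nat.Partrec.Code m).eval 0).Dom := by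
    refine h.of_eq fun m => ?_
    have : (Nat.rfind fun m' => Part.some (decide (2 ^ m' = 2 ^ m))) = Part.some m := by
      refine Part.eq_some_iff.2 (Nat.mem_rfind.2 ⟨by simp, fun {k} hk => ?_⟩)
      simp [hk.ne]
    rw [this]; simp
  obtain ⟨f, hf, hfe⟩ := ComputablePred.computable_iff.1 h2
  refine ComputablePred.computable_iff.2 ⟨fun c => f (Encodable.encode c), hf.comp Computable.encode, ?_⟩
  funext c
  have := congrFun hfe (Encodable.encode c)
  simpa using this

theorem trNat_two_pow (m : ℕ) :
    PartrecToTM2.trNat (2 ^ m) =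
      List.replicate m PartrecToTM2.Γ'.bit0 ++ [PartrecToTM2.Γ'.bit1] := by
  induction m with
  | zero => rfl
  | succ m ih =>
    have h : ((2 ^ (m + 1) : ℕ) : Num) = Num.bit0 ((2 ^ m : ℕ) : Num) := by
      apply Num.to_nat_inj.1
      rw [Num.to_of_nat, Num.cast_bit0, Num.to_of_nat]
      ring
    rw [PartrecToTM2.trNat, h, List.replicate_succ, List.cons_append, ← ih, PartrecToTM2.trNat]
    have h0 : ((2 ^ m : ℕ) : Num) ≠ 0 := by
      intro h0
      have := congrArg (fun n : Num => (n : ℕ)) h0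
      rw [Num.to_of_nat] at this
      exact absurd this (by positivity)
    rcases h1 : ((2 ^ m : ℕ) : Num) with _ | p
    · exact absurd h1 h0
    · rfl

/-- A one-tape machine with finite alphabet and finite state set whose halting problem is
undecidable already for the inputs `x y z z … z`. -/
theorem exists_tm0 : ∃ (Γ Λ : Type) (_ : Fintype Γ) (_ : Inhabited Γ) (_ : Fintype Λ)
    (_ : Inhabited Λ) (M : TM0.Machine Γ Λ) (x y z : Γ),
    ¬ ComputablePred fun m : ℕ =>
      (StateTransition.eval (TM0.step M) (TM0.init (x :: y :: List.replicate m z))).Dom := by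
  classical
  obtain ⟨g, hg, hnc⟩ := exists_partrec
  obtain ⟨c, hc⟩ := ToPartrec.Code.exists_code (Nat.Partrec'.part_iff₁.2 hg)
  let iΛ : Inhabited PartrecToTM2.Λ' := ⟨PartrecToTM2.trNormal c PartrecToTM2.Cont'.halt⟩
  obtain ⟨Λ, i1, i2, M, hM⟩ := @tm2_to_tm0 _ _ (fun _ => PartrecToTM2.Γ') _ _ iΛ _ _ PartrecToTM2.tr _
    (PartrecToTM2.tr_supports c PartrecToTM2.Cont'.halt) PartrecToTM2.K'.main
  have iK : Finite PartrecToTM2.K' :=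
    Finite.of_surjective (α := Fin 4) ![PartrecToTM2.K'.main, PartrecToTM2.K'.rev, PartrecToTM2.K'.aux, PartrecToTM2.K'.stack] (by
      rintro (_ | _ | _ | _)
      exacts [⟨0, rfl⟩, ⟨1, rfl⟩, ⟨2, rfl⟩, ⟨3, rfl⟩])
  have := Fintype.ofFinite PartrecToTM2.K'
  refine ⟨TM2to1.Γ' PartrecToTM2.K' (fun _ => PartrecToTM2.Γ'), Λ,
    inferInstanceAs (Fintype (Bool × (PartrecToTM2.K' → Option PartrecToTM2.Γ'))),
    inferInstance, i1, i2, M,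
    (true, Function.update (fun _ => none) PartrecToTM2.K'.main (some PartrecToTM2.Γ'.cons)),
    (false, Function.update (fun _ => none) PartrecToTM2.K'.main (some PartrecToTM2.Γ'.bit1)),
    (false, Function.update (fun _ => none) PartrecToTM2.K'.main (some PartrecToTM2.Γ'.bit0)), fun h => hnc (h.of_eq fun m => ?_)⟩
  have h1 := hM (PartrecToTM2.trList [2 ^ m])
  have h2 : TM2to1.trInit (Γ := fun _ => PartrecToTM2.Γ') PartrecToTM2.K'.main (PartrecToTM2.trList [2 ^ m]) =
    (true, Function.update (fun _ => none) PartrecToTM2.K'.main (some PartrecToTM2.Γ'.cons)) ::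
    (false, Function.update (fun _ => none) PartrecToTM2.K'.main (some PartrecToTM2.Γ'.bit1)) ::
    List.replicate m (false, Function.update (fun _ => none) PartrecToTM2.K'.main (some PartrecToTM2.Γ'.bit0)) := by
    have h3 : (PartrecToTM2.trList [2 ^ m]).reverse = PartrecToTM2.Γ'.cons ::
        PartrecToTM2.Γ'.bit1 :: List.replicate m PartrecToTM2.Γ'.bit0 := by
      simp [PartrecToTM2.trList, trNat_two_pow]
    rw [TM2to1.trInit, h3]
    exact congrArg (fun l : List (Bool × (PartrecToTM2.K' → Option PartrecToTM2.Γ')) =>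
      (true, Function.update (fun _ => none) PartrecToTM2.K'.main (some PartrecToTM2.Γ'.cons)) ::
      (false, Function.update (fun _ => none) PartrecToTM2.K'.main (some PartrecToTM2.Γ'.bit1)) ::
      l) List.map_replicate
  rw [h2] at h1
  refine h1.trans ?_
  have h3 : (@TM2.init PartrecToTM2.K' (fun _ => PartrecToTM2.Γ') _ _ iΛ _ _ PartrecToTM2.K'.main (PartrecToTM2.trList [2 ^ m]))
     = PartrecToTM2.init c [2 ^ m] := by
    unfold TM2.init PartrecToTM2.init
    congr 1
    funext k; cases k <;> rfl
  rw [h3, PartrecToTM2.tr_eval]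
  have := hc (List.Vector.cons (2^m) List.Vector.nil)
  have h4 : c.eval [2 ^ m] = pure <$> g (2 ^ m) := this
  rw [h4]
  rfl

end Machines

/-! ### Simulation by a queue of letters -/

section Queue

open Turing

variable {Γ Λ : Type} [Inhabited Γ] [Inhabited Λ]

/-- Letters of the queue words: `inl (some a)` is the tape symbol `a`, `inl none` the mark where
the two ends of the written part of the tape meet, `inr (some q)` the head in state `q`, and
`inr none` the mark of a halted computation. -/
abbrev QSym (Γ Λ : Type) : Type := Option Γ ⊕ Option Λ

/-- The word, read circularly, of the configuration with state `q`, the cells `R` from the head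
rightwards and the cells `L` from the head leftwards (nearest first). -/
def confWord (q : Λ) (L R : List Γ) : List (QSym Γ Λ) :=
  .inr (some q) :: (R.map some ++ none :: L.reverse.map some).map .inl

/-- The tape with the cells `R` from the head rightwards, `L` to the left of the head, and blanks
elsewhere. -/
def confTape (L R : List Γ) : Tape Γ := Tape.mk' (ListBlank.mk L) (ListBlank.mk R)

/-- The end mark, put back after a rule has consumed it as the right neighbour of the head; empty
if that neighbour was a tape symbol. -/
def endMark : Option Γ → List (QSym Γ Λ)
  | none => [.inl none]
  | some _ => []

/-- The word replacing the head in state `q` together with its neighbours `b` (left) and `a`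
(right, the scanned cell) in one step of `M`. A neighbour `none` is the end mark and stands for a
blank cell, which is written out where the step needs it; if `M` halts, the halting mark remains. -/
def ruleOut (M : TM0.Machine Γ Λ) (b : Option Γ) (q : Λ) (a : Option Γ) : List (QSym Γ Λ) :=
  match M q (a.getD default), b with
  | none, _ => [.inr none]
  | some (q', .move .right), b =>
      .inl b :: .inl (some (a.getD default)) :: .inr (some q') :: endMark a
  | some (q', .move .left), some b =>
      .inr (some q') :: .inl (some b) :: .inl (some (a.getD default)) :: endMark a
  | some (q', .move .left), none =>
      .inl none :: .inr (some q') :: .inl (some default) :: .inl (some (a.getD default)) ::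
        endMark a
  | some (q', .write c), b => .inl b :: .inr (some q') :: .inl (some c) :: endMark a

theorem rot_cons_append {β : Type} (u v : List β) (p : β) : (u ++ p :: v) ~r (p :: (v ++ u)) :=
  List.isRotated_append

theorem mk_headI_tail (R : List Γ) : ListBlank.mk R = ListBlank.mk (R.headI :: R.tail) := by
  rw [← ListBlank.cons_mk, ← ListBlank.head_mk, ← ListBlank.tail_mk, ListBlank.cons_head_tail]

theorem confTape_head (L R : List Γ) : (confTape L R).head = R.headI := by
  rw [confTape, Tape.mk'_head, ListBlank.head_mk]

theorem confTape_right (L R : List Γ) :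
    (confTape L R).move .right = confTape (R.headI :: L) R.tail := by
  rw [confTape, Tape.move_right_mk', ListBlank.head_mk, ListBlank.tail_mk, ListBlank.cons_mk,
    confTape]

theorem confTape_left (L R : List Γ) :
    (confTape L R).move .left = confTape L.tail (L.headI :: R.headI :: R.tail) := by
  rw [confTape, Tape.move_left_mk', ListBlank.head_mk, ListBlank.tail_mk, mk_headI_tail R,
    ListBlank.cons_mk, confTape]

theorem confTape_write (L R : List Γ) (c : Γ) :
    (confTape L R).write c = confTape L (c :: R.tail) := by
  rw [confTape, Tape.write_mk', ListBlank.tail_mk, ListBlank.cons_mk, confTape]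

/-- Some rotation of a configuration word starts with the head and its two neighbours. Either the
machine halts there and the replacement is the halting mark, or replacing the triple by `ruleOut`
gives, up to rotation, the word of the next configuration. Nonemptiness of the written part keeps
the two neighbours of the head distinct letters of the word. -/
theorem step_word (M : TM0.Machine Γ Λ) (q : Λ) (L R : List Γ) (h : 1 ≤ L.length + R.length) :
    ∃ (b a : Option Γ) (y : List (Option Γ)),
      confWord q L R ~r (.inl b :: .inr (some q) :: .inl a :: y.map .inl) ∧
      ((TM0.step M ⟨q, confTape L R⟩ = none ∧ ruleOut M b q a = [.inr none]) ∨
        ∃ q' L' R', 1 ≤ List.length L' + List.length R' ∧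
          TM0.step M ⟨q, confTape L R⟩ = some ⟨q', confTape L' R'⟩ ∧
          (y.map .inl ++ ruleOut M b q a) ~r confWord q' L' R') := by
  have hrot : ∀ {w x : List (QSym Γ Λ)} {q : Λ} (u v : List (QSym Γ Λ)),
      w = u ++ .inr (some q) :: v → x = .inr (some q) :: (v ++ u) → w ~r x := by
    rintro w x q u v rfl rfl
    exact rot_cons_append u v _
  -- the three shapes differ in whether the end marker is one of the neighbours of the head
  rcases L with _ | ⟨l, L⟩ <;> rcases R with _ | ⟨r, R⟩
  · simp at h
  · refine ⟨none, some r, R.map some, (hrot [.inl none] (.inl (some r) :: (R.map some).map .inl)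
      rfl (by simp [confWord])).symm, ?_⟩
    rcases hM : M q r with _ | ⟨q', (_ | _) | c⟩
    · left; simp [TM0.step, ruleOut, confTape_head, hM]
    · refine .inr ⟨q', [], default :: r :: R, by simp, ?_, ?_⟩
      · simp [TM0.step, confTape_head, hM, confTape_left]
      · exact hrot (q := q') ((R.map some).map .inl ++ [.inl none]) [.inl (some default), .inl (some r)]
          (by simp [ruleOut, hM, endMark]) (by simp [confWord])
    · refine .inr ⟨q', [r], R, by simp, ?_, ?_⟩
      · simp [TM0.step, confTape_head, hM, confTape_right]
      · exact hrot (q := q') ((R.map some).map .inl ++ [.inl none, .inl (some r)]) []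
          (by simp [ruleOut, hM, endMark]) (by simp [confWord])
    · refine .inr ⟨q', [], c :: R, by simp, ?_, ?_⟩
      · simp [TM0.step, confTape_head, hM, confTape_write]
      · exact hrot (q := q') ((R.map some).map .inl ++ [.inl none]) [.inl (some c)]
          (by simp [ruleOut, hM, endMark]) (by simp [confWord])
  · refine ⟨some l, none, L.reverse.map some, (hrot [.inl (some l)]
      (.inl none :: (L.reverse.map some).map .inl) rfl (by simp [confWord])).symm, ?_⟩
    rcases hM : M q default with _ | ⟨q', (_ | _) | c⟩
    · left; simp [TM0.step, ruleOut, confTape_head, hM]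
    · refine .inr ⟨q', L, [l, default], by simp, ?_, ?_⟩
      · simp [TM0.step, confTape_head, hM, confTape_left]
      · exact hrot (q := q') ((L.reverse.map some).map .inl)
          [.inl (some l), .inl (some default), .inl none]
          (by simp [ruleOut, hM, endMark]) (by simp [confWord])
    · refine .inr ⟨q', default :: l :: L, [], by simp, ?_, ?_⟩
      · simp [TM0.step, confTape_head, hM, confTape_right]
      · exact hrot (q := q') ((L.reverse.map some).map .inl ++ [.inl (some l), .inl (some default)])
          [.inl none] (by simp [ruleOut, hM, endMark]) (by simp [confWord])
    · refine .inr ⟨q', l :: L, [c], by simp, ?_, ?_⟩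
      · simp [TM0.step, confTape_head, hM, confTape_write]
      · exact hrot (q := q') ((L.reverse.map some).map .inl ++ [.inl (some l)]) [.inl (some c), .inl none]
          (by simp [ruleOut, hM, endMark]) (by simp [confWord])
  · refine ⟨some l, some r, R.map some ++ none :: L.reverse.map some, (hrot [.inl (some l)]
      (.inl (some r) :: (R.map some ++ none :: L.reverse.map some).map .inl)
      rfl (by simp [confWord])).symm, ?_⟩
    rcases hM : M q r with _ | ⟨q', (_ | _) | c⟩
    · left; simp [TM0.step, ruleOut, confTape_head, hM]
    · refine .inr ⟨q', L, l :: r :: R, by simp; omega, ?_, ?_⟩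
      · simp [TM0.step, confTape_head, hM, confTape_left]
      · exact hrot (q := q') ((R.map some ++ none :: L.reverse.map some).map .inl)
          [.inl (some l), .inl (some r)]
          (by simp [ruleOut, hM, endMark]) (by simp [confWord])
    · refine .inr ⟨q', r :: l :: L, R, by simp; omega, ?_, ?_⟩
      · simp [TM0.step, confTape_head, hM, confTape_right]
      · exact hrot (q := q') ((R.map some ++ none :: L.reverse.map some).map .inl ++
          [.inl (some l), .inl (some r)]) []
          (by simp [ruleOut, hM, endMark]) (by simp [confWord])
    · refine .inr ⟨q', l :: L, c :: R, by simp; omega, ?_, ?_⟩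
      · simp [TM0.step, confTape_head, hM, confTape_write]
      · exact hrot (q := q') ((R.map some ++ none :: L.reverse.map some).map .inl ++ [.inl (some l)])
          [.inl (some c)] (by simp [ruleOut, hM, endMark]) (by simp [confWord])

/-- The rules `(u, u')` of the queue system: remove the prefix `u`, append `u'`. Letters may be
rotated to the back, a machine step may be performed, and the halting mark absorbs the tape symbols
and then disappears. -/
inductive IsRule (M : TM0.Machine Γ Λ) : List (QSym Γ Λ) × List (QSym Γ Λ) → Prop
  | rotate (x) : IsRule M ([x], [x])
  | step (b q a) : IsRule M ([.inl b, .inr (some q), .inl a], ruleOut M b q a)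
  | absorb (a) : IsRule M ([.inr none, .inl a], [.inr none])
  | done : IsRule M ([.inr none], [])

theorem exists_ruleList [Fintype Γ] [Fintype Λ] (M : TM0.Machine Γ Λ) :
    ∃ rs : List (List (QSym Γ Λ) × List (QSym Γ Λ)), ∀ r, r ∈ rs ↔ IsRule M r := by
  classical
  have hfin : {r | IsRule M r}.Finite := by
    refine Set.Finite.subset ((Set.finite_range fun x : QSym Γ Λ => ([x], [x])).union
      ((Set.finite_range fun p : Option Γ × Λ × Option Γ =>
        (([.inl p.1, .inr (some p.2.1), .inl p.2.2], ruleOut M p.1 p.2.1 p.2.2) :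
          List (QSym Γ Λ) × List (QSym Γ Λ))).union
      ((Set.finite_range fun a : Option Γ =>
        (([.inr none, .inl a], [.inr none]) : List (QSym Γ Λ) × List (QSym Γ Λ))).union
      (Set.finite_singleton ([.inr none], []))))) ?_
    rintro _ (x | ⟨b, q, a⟩ | a | _)
    · exact .inl ⟨x, rfl⟩
    · exact .inr (.inl ⟨(b, q, a), rfl⟩)
    · exact .inr (.inr (.inl ⟨a, rfl⟩))
    · exact .inr (.inr (.inr rfl))
  exact ⟨hfin.toFinset.toList, fun r => by simp⟩

/-- The word `x` can be emptied by the queue rules, expressed by one word equation: the letters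
consumed in the course of the run are those of `x` followed by all the appended ones. -/
def QSol (M : TM0.Machine Γ Λ) (x : List (QSym Γ Λ)) : Prop :=
  ∃ l : List (List (QSym Γ Λ) × List (QSym Γ Λ)), (∀ r ∈ l, IsRule M r) ∧
    x ++ (l.map Prod.snd).flatten = (l.map Prod.fst).flatten

/-- Prepending one application of a rule to a run. -/
theorem QSol.back {M : TM0.Machine Γ Λ} {g h x : List (QSym Γ Λ)} (hr : IsRule M (g, h))
    (H : QSol M (x ++ h)) : QSol M (g ++ x) := by
  obtain ⟨l, hl, e⟩ := H
  refine ⟨(g, h) :: l, ?_, by simpa using e⟩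
  simpa using ⟨hr, fun a b => hl (a, b)⟩

theorem QSol.rot {M : TM0.Machine Γ Λ} {x x' : List (QSym Γ Λ)} (h : x ~r x')
    (H : QSol M x') : QSol M x := by
  obtain ⟨n, rfl⟩ := h
  induction n generalizing x with
  | zero => simpa using H
  | succ n ih =>
    rcases x with _ | ⟨a, x⟩
    · simpa using H
    · rw [List.rotate_cons_succ] at H
      exact QSol.back (g := [a]) (.rotate a) (ih H)

/-- A word carrying the halting mark can be emptied. -/
theorem QSol.halted (M : TM0.Machine Γ Λ) (y : List (Option Γ)) :
    QSol M (.inr none :: y.map .inl) := by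
  induction y with
  | nil => exact QSol.back (g := [.inr none]) (x := []) .done ⟨[], by simp, rfl⟩
  | cons a y ih =>
    exact QSol.back (g := [.inr none, .inl a]) (.absorb a) (QSol.rot (rot_cons_append _ [] _) ih)

/-- A halting computation is a run of the queue rules that empties the configuration word. -/
theorem qSol_of_dom (M : TM0.Machine Γ Λ) (q : Λ) (L R : List Γ) (h : 1 ≤ L.length + R.length)
    (H : (StateTransition.eval (TM0.step M) ⟨q, confTape L R⟩).Dom) :
    QSol M (confWord q L R) := by
  obtain ⟨hr, hn⟩ := StateTransition.mem_eval.1 (Part.get_mem H)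
  generalize (StateTransition.eval (TM0.step M) ⟨q, confTape L R⟩).get H = d at hr hn
  clear H
  generalize hc : (⟨q, confTape L R⟩ : TM0.Cfg Γ Λ) = c at hr
  induction hr using Relation.ReflTransGen.head_induction_on generalizing q L R with
  | refl =>
    obtain ⟨b, a, y, h1, ⟨h2, h3⟩ | ⟨q', L', R', _, h3, _⟩⟩ := step_word M q L R h
    · refine QSol.rot h1 (QSol.back (.step b q a) (x := y.map .inl) ?_)
      rw [h3]
      exact QSol.rot (rot_cons_append _ [] _) (QSol.halted M y)
    · rw [hc, hn] at h3; cases h3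
  | head h' _ ih =>
    obtain ⟨b, a, y, h1, ⟨h2, h3⟩ | ⟨q', L', R', h2, h3, h4⟩⟩ := step_word M q L R h
    · rw [hc, h'] at h2; cases h2
    · refine QSol.rot h1 (QSol.back (.step b q a) (x := y.map .inl) (QSol.rot h4 ?_))
      rw [hc, h'] at h3
      exact ih q' L' R' h2 (Option.some.inj h3).symm

/-- Two rotations of the same word are equal if both begin with its only letter satisfying
`P`. -/
theorem rot_unique {β : Type} {P : β → Prop} {p p' : β} {u v : List β}
    (h : (p :: u) ~r (p' :: v)) (hp : P p) (hv : ∀ x ∈ v, ¬ P x) : p :: u = p' :: v := by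
  -- a proper rotation would put the letter `p` at a position of `v`
  obtain ⟨n, hn⟩ := h.symm
  rw [← List.rotate_mod] at hn
  have hlt := Nat.mod_lt n (show 0 < (p' :: v).length by simp)
  generalize n % (p' :: v).length = k at hn hlt
  rcases k with _ | k
  · simpa using hn.symm
  · rw [List.rotate_eq_drop_append_take hlt.le] at hn
    have hk : k < v.length := by simpa using hlt
    rw [List.drop_succ_cons, List.drop_eq_getElem_cons hk, List.cons_append] at hn
    exact absurd hp ((List.cons.inj hn).1 ▸ hv _ (List.getElem_mem hk))

/-- Every run that empties a configuration word forces the machine to halt: a rotation does not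
change the configuration, a step rule matches only at the head and then performs the step of the
machine, and no other rule applies while the halting mark is absent. -/
theorem dom_of_rules (M : TM0.Machine Γ Λ) (l : List (List (QSym Γ Λ) × List (QSym Γ Λ)))
    (hl : ∀ r ∈ l, IsRule M r) (q : Λ) (L R : List Γ) (h : 1 ≤ L.length + R.length)
    (x : List (QSym Γ Λ)) (hx : x ~r confWord q L R)
    (e : x ++ (l.map Prod.snd).flatten = (l.map Prod.fst).flatten) :
    (StateTransition.eval (TM0.step M) ⟨q, confTape L R⟩).Dom := by
  have hlen : ∀ {x : List (QSym Γ Λ)} {q : Λ} {L R : List Γ}, x ~r confWord q L R →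
      x.length = L.length + R.length + 2 := by
    intro x q L R hx
    rw [hx.perm.length_eq]; simp [confWord]; omega
  induction l generalizing q L R x with
  | nil =>
    have := hlen hx
    simp at e
    simp [e] at this
  | cons r l ih =>
    have hxl := hlen hx
    obtain ⟨hr, hl⟩ := List.forall_mem_cons.1 hl
    have ih' := ih hl
    -- `x` has at least three letters, so the left side of each rule is a prefix of `x` itself
    have split : ∀ g h : List (QSym Γ Λ), g.length ≤ 3 →
        x ++ (h ++ (l.map Prod.snd).flatten) = g ++ (l.map Prod.fst).flatten →
        ∃ x', x = g ++ x' ∧ (x' ++ h) ++ (l.map Prod.snd).flatten = (l.map Prod.fst).flatten := by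
      intro g h' hg e
      obtain ⟨x', rfl⟩ : g <+: x :=
        List.prefix_of_prefix_length_le ⟨_, e.symm⟩ (List.prefix_append _ _) (by omega)
      exact ⟨x', rfl, by simpa using e⟩
    have noH : .inr none ∉ x := by
      rw [hx.mem_iff]; simp [confWord]
    simp only [List.map_cons, List.flatten_cons] at e
    rcases hr with s | ⟨b1, q1, a1⟩ | a | _
    · obtain ⟨x', rfl, e'⟩ := split [s] [s] (by simp) e
      exact ih' _ _ _ h _ ((rot_cons_append x' [] s).trans hx) e'
    · obtain ⟨x', rfl, e'⟩ := split [_, _, _] (ruleOut M b1 q1 a1) (by simp) e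
      obtain ⟨b, a, y, h1, h2⟩ := step_word M q L R h
      have h3 := hx.trans h1
      have h4 : (.inr (some q1) :: (.inl a1 :: x' ++ [.inl b1]) : List (QSym Γ Λ)) ~r
          (.inr (some q) :: (.inl a :: y.map .inl ++ [.inl b])) :=
        ((rot_cons_append [Sum.inl b1] (.inl a1 :: x') (.inr (some q1))).symm.trans h3).trans
          (rot_cons_append [Sum.inl b] (.inl a :: y.map .inl) (.inr (some q)))
      -- the head occurs once in a configuration word, so the triples of both rotations agree
      have h5 := rot_unique (P := fun s => s.isRight) h4 rfl (by simp)
      simp only [List.cons_append, List.cons.injEq] at h5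
      obtain ⟨h5, h6, h7⟩ := h5
      obtain ⟨h8, h9⟩ := List.append_inj' h7 rfl
      cases h5; cases h6; cases h9; subst h8
      obtain ⟨h2, -⟩ | ⟨q', L', R', h2, h3, h4⟩ := h2
      · exact (StateTransition.mem_eval.2 ⟨Relation.ReflTransGen.refl, h2⟩).1
      · rw [StateTransition.reaches_eval (Relation.ReflTransGen.single h3)]
        exact ih' _ _ _ h2 _ h4 e'
    · obtain ⟨x', rfl, e'⟩ := split [.inr none, .inl a] [.inr none] (by simp) e
      simp at noH
    · obtain ⟨x', rfl, e'⟩ := split [.inr none] [] (by simp) e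
      simp at noH

/-- A rotation of the initial configuration word for the input `x y z … z` with `m` copies of
`z`, chosen so that the part depending on `m` comes last. -/
def startWord (Λ : Type) [Inhabited Λ] (x y z : Γ) (m : ℕ) : List (QSym Γ Λ) :=
  .inl none :: .inr (some default) :: .inl (some x) :: .inl (some y) ::
    List.replicate m (.inl (some z))

theorem dom_iff_qSol (M : TM0.Machine Γ Λ) (x y z : Γ) (m : ℕ) :
    (StateTransition.eval (TM0.step M) (TM0.init (x :: y :: List.replicate m z))).Dom ↔
      QSol M (startWord Λ x y z m) := by
  have h : (startWord Λ x y z m : List (QSym Γ Λ)) ~r confWord default [] (x :: y :: List.replicate m z) := by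
    refine (rot_cons_append [Sum.inl none] (.inl (some x) :: .inl (some y) ::
      List.replicate m (.inl (some z))) (.inr (some default))).trans ?_
    simp [confWord, List.IsRotated.refl]
  constructor
  · intro H
    exact QSol.rot h (qSol_of_dom M _ _ _ (by simp) H)
  · rintro ⟨l, hl, e⟩
    exact dom_of_rules M l hl _ _ _ (by simp) _ h e

end Queue

/-! ### Affine reachability -/

section Arith

/-- The pairs generated from `(0, 0)` by the maps `(V, W) ↦ (a * V + b, c * W + d)` with
`(a, b, c, d)` in `rules`. -/
inductive Reach (rules : List (ℕ × ℕ × ℕ × ℕ)) : ℕ → ℕ → Prop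
  | zero : Reach rules 0 0
  | step {a b c d V W : ℕ} : (a, b, c, d) ∈ rules → Reach rules V W →
      Reach rules (a * V + b) (c * W + d)

/-- The number whose base-`s` digits, least significant first, are the letters of `x` encoded by
`dg`. The digit `0` is never used, so that the word can be recovered from the number. -/
def wordVal {S : Type} (s : ℕ) (dg : S → ℕ) (x : List S) : ℕ := Nat.ofDigits s (x.map dg)

theorem wordVal_append {S : Type} (s : ℕ) (dg : S → ℕ) (x y : List S) :
    wordVal s dg (x ++ y) = s ^ x.length * wordVal s dg y + wordVal s dg x := by
  rw [wordVal, List.map_append, Nat.ofDigits_append, List.length_map, add_comm]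
  rfl

theorem wordVal_cons {S : Type} (s : ℕ) (dg : S → ℕ) (a : S) (y : List S) :
    wordVal s dg (a :: y) = dg a + s * wordVal s dg y := by
  rw [wordVal, List.map_cons, Nat.ofDigits_cons]
  rfl

theorem wordVal_injective {S : Type} {s : ℕ} {dg : S → ℕ} (hs : 1 < s) (hinj : dg.Injective)
    (h0 : ∀ a, dg a ≠ 0) (hlt : ∀ a, dg a < s) : (wordVal s dg).Injective := by
  have key : ∀ x : List S, Nat.digits s (wordVal s dg x) = x.map dg := by
    intro x
    refine Nat.digits_ofDigits s hs _ (by simpa using fun a _ => hlt a) fun h => ?_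
    obtain ⟨a, -, ha⟩ := List.mem_map.1 (List.getLast_mem h)
    rw [← ha]
    exact h0 a
  intro x y h
  have := congrArg (Nat.digits s) h
  rw [key, key] at this
  exact hinj.list_map this

/-- The affine maps by which prepending `r.1`, respectively `r.2`, acts on values of words. -/
def wordRule {S : Type} (s : ℕ) (dg : S → ℕ) (r : List S × List S) : ℕ × ℕ × ℕ × ℕ :=
  (s ^ r.1.length, wordVal s dg r.1, s ^ r.2.length, wordVal s dg r.2)

theorem reach_wordRule_iff {S : Type} (s : ℕ) (dg : S → ℕ) (rs : List (List S × List S))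
    (V W : ℕ) : Reach (rs.map (wordRule s dg)) V W ↔
      ∃ l : List (List S × List S), (∀ r ∈ l, r ∈ rs) ∧
        V = wordVal s dg (l.map Prod.fst).flatten ∧
        W = wordVal s dg (l.map Prod.snd).flatten := by
  constructor
  · intro h
    induction h with
    | zero => exact ⟨[], by simp, rfl, rfl⟩
    | step hr _ ih =>
      obtain ⟨l, hl, rfl, rfl⟩ := ih
      obtain ⟨r, hr', e⟩ := List.mem_map.1 hr
      obtain ⟨rfl, rfl, rfl, rfl⟩ : _ ∧ _ ∧ _ ∧ _ := by simpa [wordRule, eq_comm] using e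
      refine ⟨r :: l, List.forall_mem_cons.2 ⟨hr', hl⟩, ?_, ?_⟩ <;>
      simp [wordVal_append]
  · rintro ⟨l, hl, rfl, rfl⟩
    induction l with
    | nil => exact Reach.zero
    | cons r l ih =>
      obtain ⟨hr, hl⟩ := List.forall_mem_cons.1 hl
      simp only [List.map_cons, List.flatten_cons, wordVal_append]
      exact Reach.step (List.mem_map_of_mem hr) (ih hl)

/-- For some fixed finite list of affine maps it is undecidable, given `m`, whether a reachable
pair satisfies `V = d m + S m * W`. Here `d m` is the value of the start word and `S m` the base
raised to its length, so that the equation says `x u'₁ … u'ₖ = u₁ … uₖ`. -/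
theorem exists_arith : ∃ (rules : List (ℕ × ℕ × ℕ × ℕ)) (S d : ℕ → ℕ), Primrec S ∧ Primrec d ∧
    (∀ a b c e, (a, b, c, e) ∈ rules → 1 ≤ a ∧ 1 ≤ b ∧ 1 ≤ c) ∧ (∀ m, 1 ≤ d m) ∧
    ¬ ComputablePred fun m => ∃ V W, Reach rules V W ∧ V = d m + S m * W := by
  obtain ⟨Γ, Λ, i1, i2, i3, i4, M, x, y, z, hM⟩ := exists_tm0
  obtain ⟨rs, hrs⟩ := exists_ruleList M
  let dg : QSym Γ Λ → ℕ := fun a => Fintype.equivFin _ a + 1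
  let s := Fintype.card (QSym Γ Λ) + 1
  have hs : 1 < s := Nat.succ_lt_succ Fintype.card_pos
  have hinj : dg.Injective := fun a b h => by simpa [dg, Fin.val_inj] using h
  have h0 : ∀ a, dg a ≠ 0 := fun a => Nat.succ_ne_zero _
  have hlt : ∀ a, dg a < s := fun a => Nat.succ_lt_succ (Fin.isLt _)
  have hval := wordVal_injective hs hinj h0 hlt
  have hpos : ∀ (a : QSym Γ Λ) l, 1 ≤ wordVal s dg (a :: l) := fun a l => by
    rw [wordVal_cons]
    exact (Nat.one_le_iff_ne_zero.2 (h0 a)).trans (Nat.le_add_right _ _)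
  have hlen : ∀ m, (startWord Λ x y z m).length = m + 4 := fun m => by simp [startWord]
  refine ⟨rs.map (wordRule s dg), fun m => s ^ (m + 4), fun m => wordVal s dg (startWord Λ x y z m),
    ?_, ?_, ?_, fun m => hpos _ _, ?_⟩
  · refine (Primrec.nat_rec₁ (f := fun _ a => a * s) (s ^ 4) ?_).of_eq fun n => ?_
    · exact Primrec.nat_mul.comp Primrec.snd (Primrec.const s)
    · induction n with
      | zero => rfl
      | succ n ih => rw [Nat.add_right_comm, pow_succ s (n + 4), ← ih]
  · have hrep : Primrec fun m => wordVal s dg (List.replicate m (.inl (some z) : QSym Γ Λ)) := by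
      refine (Primrec.nat_rec₁ (f := fun _ a => dg (.inl (some z)) + s * a) 0 ?_).of_eq fun n => ?_
      · exact Primrec.nat_add.comp (Primrec.const _)
          (Primrec.nat_mul.comp (Primrec.const s) Primrec.snd)
      · induction n with
        | zero => rfl
        | succ n ih => rw [List.replicate_succ, wordVal_cons, ← ih]
    have hcons : ∀ (a : QSym Γ Λ) (f : ℕ → List (QSym Γ Λ)),
        Primrec (fun m => wordVal s dg (f m)) → Primrec fun m => wordVal s dg (a :: f m) := by
      intro a f hf
      simp only [wordVal_cons]
      exact Primrec.nat_add.comp (Primrec.const _) (Primrec.nat_mul.comp (Primrec.const s) hf)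
    exact hcons _ _ (hcons _ _ (hcons _ _ (hcons _ _ hrep)))
  · intro a b c e h
    obtain ⟨r, hr, e⟩ := List.mem_map.1 h
    obtain ⟨rfl, rfl, rfl, rfl⟩ : _ ∧ _ ∧ _ ∧ _ := by simpa [wordRule, eq_comm] using e
    refine ⟨Nat.one_le_pow _ _ (by omega), ?_, Nat.one_le_pow _ _ (by omega)⟩
    rcases (hrs r).1 hr with _ | _ | _ | _ <;> exact hpos _ _
  · intro h
    refine hM (h.of_eq fun m => ?_)
    rw [dom_iff_qSol]
    constructor
    · rintro ⟨V, W, h, e⟩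
      obtain ⟨l, hl, rfl, rfl⟩ := (reach_wordRule_iff _ _ _ _ _).1 h
      refine ⟨l, fun r hr => (hrs r).1 (hl r hr), hval ?_⟩
      rw [e, wordVal_append, hlen, add_comm]
    · rintro ⟨l, hl, e⟩
      refine ⟨_, _, (reach_wordRule_iff _ _ _ _ _).2 ⟨l, fun r hr => (hrs r).2 (hl r hr), rfl, rfl⟩,
        ?_⟩
      rw [← e, wordVal_append, hlen, add_comm]

end Arith

/-! ### Values in FL_ew-algebras and Kripke models -/

namespace FLew

variable {α : Type} [FLew α]

theorem le_one' (a : α) : a ≤ 1 := by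
  rw [one_eq_top]; exact le_top

theorem mul_le_mul_r {a b : α} (h : a ≤ b) (c : α) : a * c ≤ b * c :=
  mul_le_iff_le_himp.2 (h.trans (mul_le_iff_le_himp.1 le_rfl))

theorem mul_mono' {a b c d : α} (h : a ≤ b) (h' : c ≤ d) : a * c ≤ b * d :=
  (mul_le_mul_r h c).trans (by rw [mul_comm b, mul_comm b]; exact mul_le_mul_r h' b)

theorem mul_le_left' (a b : α) : a * b ≤ a := by
  simpa using mul_mono' (le_refl a) (le_one' b)

theorem mul_le_right'' (a b : α) : a * b ≤ b := by
  simpa using mul_mono' (le_one' a) (le_refl b)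

theorem himp_eq_one {a b : α} : himp a b = 1 ↔ a ≤ b := by
  rw [← one_mul a, mul_le_iff_le_himp, one_mul]
  exact ⟨fun h => h.ge, fun h => le_antisymm (le_one' _) h⟩

theorem himp_mul_le (a b : α) : himp a b * a ≤ b := mul_le_iff_le_himp.2 le_rfl

theorem eq_one_of_mul {a b : α} (h : a * b = 1) : a = 1 ∧ b = 1 :=
  ⟨le_antisymm (le_one' _) (h ▸ mul_le_left' a b), le_antisymm (le_one' _) (h ▸ mul_le_right'' a b)⟩

/-- `(a → b) · (b → a) = 1` says `a = b`. -/
theorem biimp_eq_one {a b : α} : himp a b * himp b a = 1 ↔ a = b := by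
  constructor
  · intro h
    obtain ⟨h1, h2⟩ := eq_one_of_mul h
    exact le_antisymm (himp_eq_one.1 h1) (himp_eq_one.1 h2)
  · rintro rfl
    rw [himp_eq_one.2 le_rfl, one_mul]

theorem pow_anti (c : α) {n m : ℕ} (h : n ≤ m) : c ^ m ≤ c ^ n := by
  obtain ⟨k, rfl⟩ := Nat.exists_eq_add_of_le h
  rw [pow_add]
  exact mul_le_left' _ _

/-- Once two consecutive powers of `c` agree, all later ones do. -/
theorem pow_stab {c : α} {n : ℕ} (h : c ^ n ≤ c ^ (n + 1)) (m : ℕ) : c ^ n ≤ c ^ m := by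
  induction m with
  | zero => rw [pow_zero]; exact le_one' _
  | succ m ih =>
    rw [pow_succ] at h ⊢
    exact h.trans (mul_le_mul_r ih c)

theorem pow_le_self {c : α} {n : ℕ} (h : 1 ≤ n) : c ^ n ≤ c := by
  simpa using pow_anti c h

end FLew

section Models

open FLew

namespace KModel

variable {α V : Type} [FLew α] (M : KModel α V)

theorem box_le {u u' : M.W} (h : M.R u u') (φ : MFormula V) : M.e u (.fBox φ) ≤ M.e u' φ :=
  (M.e_box u φ).1 ⟨u', h, rfl⟩

theorem le_box {u : M.W} {φ : MFormula V} {a : α} (h : ∀ u', M.R u u' → a ≤ M.e u' φ) :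
    a ≤ M.e u (.fBox φ) :=
  (M.e_box u φ).2 (by rintro _ ⟨u', hu', rfl⟩; exact h u' hu')

theorem le_dia {u u' : M.W} (h : M.R u u') (φ : MFormula V) : M.e u' φ ≤ M.e u (.fDia φ) :=
  (M.e_dia u φ).1 ⟨u', h, rfl⟩

theorem dia_le {u : M.W} {φ : MFormula V} {a : α} (h : ∀ u', M.R u u' → M.e u' φ ≤ a) :
    M.e u (.fDia φ) ≤ a :=
  (M.e_dia u φ).2 (by rintro _ ⟨u', hu', rfl⟩; exact h u' hu')

theorem box_eq_one {u : M.W} {φ : MFormula V} :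
    M.e u (.fBox φ) = 1 ↔ ∀ u', M.R u u' → M.e u' φ = 1 :=
  ⟨fun h _ hu => le_antisymm (le_one' _) (h ▸ M.box_le hu φ),
    fun h => le_antisymm (le_one' _) (M.le_box fun u' hu => (h u' hu).ge)⟩

theorem e_fPow (u : M.W) (φ : MFormula V) (n : ℕ) : M.e u (.fPow φ n) = M.e u φ ^ n := by
  induction n with
  | zero => rw [MFormula.fPow, M.e_one, pow_zero]
  | succ n ih => rw [MFormula.fPow, M.e_mul, ih, pow_succ]

theorem fIff_eq_one {u : M.W} {φ ψ : MFormula V} :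
    M.e u (.fIff φ ψ) = 1 ↔ M.e u φ = M.e u ψ := by
  rw [MFormula.fIff, M.e_mul, M.e_imp, M.e_imp, biimp_eq_one]

theorem fImp_eq_one {u : M.W} {φ ψ : MFormula V} :
    M.e u (.fImp φ ψ) = 1 ↔ M.e u φ ≤ M.e u ψ := by
  rw [M.e_imp, himp_eq_one]

theorem fAnd_eq_one {u : M.W} {φ ψ : MFormula V} :
    M.e u (.fAnd φ ψ) = 1 ↔ M.e u φ = 1 ∧ M.e u ψ = 1 := by
  rw [M.e_and, one_eq_top, inf_eq_top_iff]

theorem bigOr_eq_one {u : M.W} {φ : MFormula V} {l : List (MFormula V)} (h : φ ∈ l)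
    (h1 : M.e u φ = 1) : M.e u (.bigOr l) = 1 := by
  rw [one_eq_top] at *
  induction l with
  | nil => simp at h
  | cons ψ l ih =>
    rw [MFormula.bigOr, M.e_or]
    rcases List.mem_cons.1 h with rfl | h
    · rw [h1, top_sup_eq]
    · rw [ih h, sup_top_eq]

/-- In a nontrivial chain, a disjunction has value `1` only if a disjunct has. -/
theorem exists_of_bigOr_eq_one (hc : FLew.isChain α) (hn : (⊥ : α) ≠ 1) {u : M.W}
    {l : List (MFormula V)} (h1 : M.e u (.bigOr l) = 1) : ∃ φ ∈ l, M.e u φ = 1 := by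
  induction l with
  | nil => rw [MFormula.bigOr, M.e_zero] at h1; exact absurd h1 hn
  | cons ψ l ih =>
    rw [MFormula.bigOr, M.e_or] at h1
    rcases hc (M.e u ψ) (M.e u (.bigOr l)) with h | h
    · rw [sup_eq_right.2 h] at h1
      obtain ⟨φ, h2, h3⟩ := ih h1
      exact ⟨φ, List.mem_cons_of_mem _ h2, h3⟩
    · rw [sup_eq_left.2 h] at h1
      exact ⟨ψ, List.mem_cons_self, h1⟩

end KModel

end Models

/-! ### From countermodels to reachable pairs -/

section Reduction

open FLew

variable {V : Type}

/-- `v ↔ (□v) ^ a · y ^ b` and `w ↔ (□w) ^ c · y ^ d` for `r = (a, b, c, d)`: at exponents of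
the value of `y`, the pair at `(v, w)` is the image of the pair at `(□v, □w)` under `r`. -/
def ruleFormula (y v w : V) (r : ℕ × ℕ × ℕ × ℕ) : MFormula V :=
  .fAnd (.fIff (.var v) (.fMul (.fPow (.fBox (.var v)) r.1) (.fPow (.var y) r.2.1)))
    (.fIff (.var w) (.fMul (.fPow (.fBox (.var w)) r.2.2.1) (.fPow (.var y) r.2.2.2)))

/-- `□(v · w) → □v · □w`. -/
def splitFormula (v w : V) : MFormula V :=
  .fImp (.fBox (.fMul (.var v) (.var w))) (.fMul (.fBox (.var v)) (.fBox (.var w)))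

/-- The premises of the reduction. -/
def redGamma (rules : List (ℕ × ℕ × ℕ × ℕ)) (y v w : V) : List (MFormula V) :=
  [.fIff (.fBox (.var y)) (.fDia (.var y)),
    .fBox (.bigOr (rules.map (ruleFormula y v w))),
    splitFormula v w, .fBox (splitFormula v w)]

/-- The conclusion of the reduction: `(□v ↔ (□w) ^ S · (□y) ^ d) → (□v · □w → □v · □w · □y)`. -/
def redPhi (y v w : V) (S d : ℕ) : MFormula V :=
  .fImp (.fIff (.fBox (.var v)) (.fMul (.fPow (.fBox (.var w)) S) (.fPow (.fBox (.var y)) d)))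
    (.fImp (.fMul (.fBox (.var v)) (.fBox (.var w)))
      (.fMul (.fMul (.fBox (.var v)) (.fBox (.var w))) (.fBox (.var y))))

/-- If the values of `v` and `w` at all successors of `u` are powers of `c` with reachable exponents,
and their products are bounded below by an element `b` not below `c ^ N`, then the values of `□v`
and `□w` at `u` are again such powers. The sums `V' + W'` of exponents are bounded by `N`; a successor with maximal sum
attains both infima, since otherwise the split formula would give `c ^ n ≤ c ^ (n + 1)` for
this sum `n`, whence `b ≤ c ^ N`. With no successors, both values are `1 = c ^ 0`. -/
theorem box_values {α : Type} [FLew α] (M : KModel α V)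
    {rules : List (ℕ × ℕ × ℕ × ℕ)} {v w : V} {b c : α} {N : ℕ} (hN : ¬ b ≤ c ^ N) {u : M.W}
    (hb : ∀ u', M.R u u' → b ≤ M.e u' (.var v) * M.e u' (.var w))
    (hsplit : M.e u (splitFormula v w) = 1)
    (hsucc : ∀ u', M.R u u' → ∃ V' W', Reach rules V' W' ∧
      M.e u' (.var v) = c ^ V' ∧ M.e u' (.var w) = c ^ W') :
    ∃ V' W', Reach rules V' W' ∧
      M.e u (.fBox (.var v)) = c ^ V' ∧ M.e u (.fBox (.var w)) = c ^ W' := by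
  by_cases hne : ∃ u', M.R u u'
  · let T : Set ℕ := {n | ∃ u' V' W', M.R u u' ∧ Reach rules V' W' ∧
      M.e u' (.var v) = c ^ V' ∧ M.e u' (.var w) = c ^ W' ∧ n = V' + W'}
    have hTne : T.Nonempty := by
      obtain ⟨u', hu'⟩ := hne
      obtain ⟨V', W', h1, h2, h3⟩ := hsucc u' hu'
      exact ⟨_, u', V', W', hu', h1, h2, h3, rfl⟩
    have hTb : BddAbove T := by
      refine ⟨N, ?_⟩
      rintro _ ⟨u', V', W', hu', h1, h2, h3, rfl⟩
      by_contra h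
      have h4 := hb u' hu'
      rw [h2, h3, ← pow_add] at h4
      exact hN (h4.trans (pow_anti c (by omega)))
    obtain ⟨u1, V1, W1, hu1, h1, h2, h3, h4⟩ := Nat.sSup_mem hTne hTb
    have hmax : ∀ u' V' W', M.R u u' → Reach rules V' W' → M.e u' (.var v) = c ^ V' →
        M.e u' (.var w) = c ^ W' → V' + W' ≤ V1 + W1 := by
      intro u' V' W' g1 g2 g3 g4
      rw [← h4]
      exact le_csSup hTb ⟨u', V', W', g1, g2, g3, g4, rfl⟩
    have hprod : c ^ (V1 + W1) ≤ M.e u (.fBox (.var v)) * M.e u (.fBox (.var w)) := by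
      have := (M.fImp_eq_one).1 hsplit
      rw [M.e_mul] at this
      refine (M.le_box fun u' hu' => ?_).trans this
      obtain ⟨V', W', g1, g2, g3⟩ := hsucc u' hu'
      rw [M.e_mul, g2, g3, ← pow_add]
      exact pow_anti c (hmax u' V' W' hu' g1 g2 g3)
    -- the powers of `c` do not stabilise at the exponent `V1 + W1`
    have hno : ¬ c ^ (V1 + W1) ≤ c ^ (V1 + W1 + 1) := by
      intro h
      have h5 := hb u1 hu1
      rw [h2, h3, ← pow_add] at h5
      exact hN (h5.trans (pow_stab h N))
    have hv1 : M.e u (.fBox (.var v)) ≤ c ^ V1 := h2 ▸ M.box_le hu1 _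
    have hw1 : M.e u (.fBox (.var w)) ≤ c ^ W1 := h3 ▸ M.box_le hu1 _
    refine ⟨V1, W1, h1, le_antisymm hv1 (M.le_box fun u' hu' => ?_),
      le_antisymm hw1 (M.le_box fun u' hu' => ?_)⟩
    · obtain ⟨V', W', g1, g2, g3⟩ := hsucc u' hu'
      rw [g2]
      by_contra h
      have hlt : V1 + 1 ≤ V' := by
        by_contra h'
        exact h (pow_anti c (by omega))
      have h5 : M.e u (.fBox (.var v)) ≤ c ^ (V1 + 1) :=
        (g2 ▸ M.box_le hu' _).trans (pow_anti c hlt)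
      refine hno (hprod.trans ((mul_mono' h5 hw1).trans ?_))
      rw [← pow_add]
      exact pow_anti c (by omega)
    · obtain ⟨V', W', g1, g2, g3⟩ := hsucc u' hu'
      rw [g3]
      by_contra h
      have hlt : W1 + 1 ≤ W' := by
        by_contra h'
        exact h (pow_anti c (by omega))
      have h5 : M.e u (.fBox (.var w)) ≤ c ^ (W1 + 1) :=
        (g3 ▸ M.box_le hu' _).trans (pow_anti c hlt)
      refine hno (hprod.trans ((mul_mono' hv1 h5).trans ?_))
      rw [← pow_add]
      exact pow_anti c (by omega)
  · refine ⟨0, 0, Reach.zero, ?_, ?_⟩ <;> rw [pow_zero, M.box_eq_one] <;>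
    exact fun u' hu' => absurd ⟨u', hu'⟩ hne

/-- A transitive model refuting the consequence yields a reachable pair on the line
`V' = d + S * W'`. -/
theorem reach_of_countermodel {α : Type} [FLew α] (hc : FLew.isChain α)
    (hwa : FLew.weaklyArchimedean α) (M : KModel α V) (ht : M.IsTrans) (r : M.W)
    {rules : List (ℕ × ℕ × ℕ × ℕ)}
    (hrules : ∀ a b c e, (a, b, c, e) ∈ rules → 1 ≤ a ∧ 1 ≤ b ∧ 1 ≤ c)
    {y v w : V} {S d : ℕ} (hΓ : ∀ γ ∈ redGamma rules y v w, M.e r γ = 1)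
    (hφ : M.e r (redPhi y v w S d) ≠ 1) :
    ∃ V' W', Reach rules V' W' ∧ V' = d + S * W' := by
  -- in the trivial algebra every formula has value `1`
  have hn : (⊥ : α) ≠ 1 := by
    intro h
    refine hφ (le_antisymm (le_one' _) ?_)
    rw [← h]
    exact bot_le
  obtain ⟨hΓ1, hΓ2, hΓ3, hΓ4⟩ : _ ∧ _ ∧ _ ∧ _ := by simpa [redGamma] using hΓ
  set c := M.e r (.fBox (.var y)) with hcdef
  set b := M.e r (.fBox (.var v)) * M.e r (.fBox (.var w)) with hbdef
  have hy : ∀ u, M.R r u → M.e u (.var y) = c := fun u hu =>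
    le_antisymm ((M.le_dia hu _).trans (M.fIff_eq_one.1 hΓ1).ge) (M.box_le hu _)
  have hrule : ∀ u, M.R r u → ∃ a1 b1 c1 d1, (a1, b1, c1, d1) ∈ rules ∧
      M.e u (.var v) = M.e u (.fBox (.var v)) ^ a1 * c ^ b1 ∧
      M.e u (.var w) = M.e u (.fBox (.var w)) ^ c1 * c ^ d1 := by
    intro u hu
    obtain ⟨φ, h1, h2⟩ := M.exists_of_bigOr_eq_one hc hn (M.box_eq_one.1 hΓ2 u hu)
    obtain ⟨⟨a1, b1, c1, d1⟩, h3, rfl⟩ := List.mem_map.1 h1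
    have h4 := M.fAnd_eq_one.1 h2
    rw [M.fIff_eq_one, M.fIff_eq_one, M.e_mul, M.e_mul, M.e_fPow, M.e_fPow, M.e_fPow, M.e_fPow,
      hy u hu] at h4
    exact ⟨a1, b1, c1, d1, h3, h4⟩
  have hsplit : ∀ u, M.R r u → M.e u (splitFormula v w) = 1 := M.box_eq_one.1 hΓ4
  have hb : ∀ u, M.R r u → b ≤ M.e u (.var v) * M.e u (.var w) := fun u hu =>
    mul_mono' (M.box_le hu _) (M.box_le hu _)
  have hφ' : ¬ FLew.himp (M.e r (.fBox (.var v))) (M.e r (.fBox (.var w)) ^ S * c ^ d) *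
      FLew.himp (M.e r (.fBox (.var w)) ^ S * c ^ d) (M.e r (.fBox (.var v))) * b ≤ b * c := by
    intro h
    refine hφ (M.fImp_eq_one.2 ?_)
    rw [M.e_imp, ← mul_le_iff_le_himp, MFormula.fIff]
    simpa only [M.e_mul, M.e_imp, M.e_fPow] using h
  have hbc : b * c ≠ b := fun h => hφ' (by rw [h]; exact mul_le_right'' _ _)
  obtain ⟨N, hN⟩ : ∃ N : ℕ, ¬ b ≤ c ^ N := by
    by_contra h
    push Not at h
    exact hbc (hwa b c h)
  -- Successors of the root need not be well-founded; induction runs over `k` with `v ≰ c ^ k`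
  -- instead. Each map has `1 ≤ a` and `1 ≤ b`, so at a world below, `v` is not even below `c ^ (k - 1)`.
  have main : ∀ k u, M.R r u → ¬ M.e u (.var v) ≤ c ^ k → ∃ V' W', Reach rules V' W' ∧
      M.e u (.var v) = c ^ V' ∧ M.e u (.var w) = c ^ W' := by
    intro k
    induction k with
    | zero => exact fun u _ h => absurd (by rw [pow_zero]; exact le_one' _) h
    | succ k ih =>
      intro u hu hk
      obtain ⟨a1, b1, c1, d1, h1, h2, h3⟩ := hrule u hu
      obtain ⟨ha1, hb1, -⟩ := hrules _ _ _ _ h1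
      obtain ⟨V', W', g1, g2, g3⟩ := box_values M hN
        (fun u' hu' => hb u' (ht _ _ _ hu hu')) (hsplit u hu) fun u' hu' => by
          refine ih u' (ht _ _ _ hu hu') fun h => hk ?_
          rw [h2, pow_succ]
          exact mul_mono' ((pow_le_self ha1).trans ((M.box_le hu' _).trans h)) (pow_le_self hb1)
      refine ⟨_, _, Reach.step h1 g1, ?_, ?_⟩
      · rw [h2, g2, pow_add, mul_comm a1, pow_mul]
      · rw [h3, g3, pow_add, mul_comm c1, pow_mul]
  obtain ⟨V', W', g1, g2, g3⟩ := box_values M hN hb hΓ3 fun u' hu' =>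
    main N u' hu' fun h => hN ((hb u' hu').trans ((mul_le_left' _ _).trans h))
  refine ⟨V', W', g1, ?_⟩
  have e1 : (c ^ W') ^ S * c ^ d = c ^ (d + S * W') := by
    rw [← pow_mul, ← pow_add, mul_comm, add_comm]
  -- If `V' ≠ T = d + S * W'`, the value of `□v ↔ (□w) ^ S · c ^ d` is small enough for the
  -- conclusion to hold: multiplied by `b = c ^ (V' + W')` it already drops below `c ^ (V' + W' + 1)`.
  rw [hbdef, g2, g3, e1] at hφ'
  generalize d + S * W' = T at hφ' ⊢
  rcases lt_trichotomy V' T with h | h | h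
  · refine absurd ?_ hφ'
    calc FLew.himp (c ^ V') (c ^ T) * FLew.himp (c ^ T) (c ^ V') * (c ^ V' * c ^ W')
        = FLew.himp (c ^ T) (c ^ V') * ((FLew.himp (c ^ V') (c ^ T) * c ^ V') * c ^ W') := by
          ac_rfl
      _ ≤ (FLew.himp (c ^ V') (c ^ T) * c ^ V') * c ^ W' := mul_le_right'' _ _
      _ ≤ c ^ T * c ^ W' := mul_le_mul_r (himp_mul_le _ _) _
      _ ≤ c ^ V' * c ^ W' * c := by
        rw [← pow_add, ← pow_add, ← pow_succ]
        exact pow_anti c (by omega)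
  · exact h
  · refine absurd ?_ hφ'
    obtain ⟨m, rfl⟩ := Nat.exists_eq_add_of_lt h
    calc FLew.himp (c ^ (T + m + 1)) (c ^ T) * FLew.himp (c ^ T) (c ^ (T + m + 1)) *
          (c ^ (T + m + 1) * c ^ W')
        = (FLew.himp (c ^ (T + m + 1)) (c ^ T) * c ^ m) *
          ((FLew.himp (c ^ T) (c ^ (T + m + 1)) * c ^ T) * c ^ W' * c) := by
          generalize FLew.himp (c ^ (T + m + 1)) (c ^ T) = x
          generalize FLew.himp (c ^ T) (c ^ (T + m + 1)) = z
          rw [pow_succ, pow_add]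
          ac_rfl
      _ ≤ (FLew.himp (c ^ T) (c ^ (T + m + 1)) * c ^ T) * c ^ W' * c := mul_le_right'' _ _
      _ ≤ c ^ (T + m + 1) * c ^ W' * c :=
        mul_le_mul_r (mul_le_mul_r (himp_mul_le _ _) _) _

end Reduction

/-! ### From reachable pairs to countermodels -/

section Counter

open FLew

variable {α V : Type} [FLew α]

/-- Values of formulas over a finite frame, where boxes and diamonds are finite meets and joins. -/
def evalF {W : Type} [Fintype W] (R : W → W → Prop) [∀ i, DecidablePred (R i)] (val : W → V → α) :
    MFormula V → W → α
  | .var x, u => val u x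
  | .fZero, _ => ⊥
  | .fOne, _ => 1
  | .fAnd φ ψ, u => evalF R val φ u ⊓ evalF R val ψ u
  | .fOr φ ψ, u => evalF R val φ u ⊔ evalF R val ψ u
  | .fMul φ ψ, u => evalF R val φ u * evalF R val ψ u
  | .fImp φ ψ, u => FLew.himp (evalF R val φ u) (evalF R val ψ u)
  | .fBox φ, u => (Finset.univ.filter (R u)).inf (evalF R val φ)
  | .fDia φ, u => (Finset.univ.filter (R u)).sup (evalF R val φ)

/-- The Kripke model on a finite frame with propositional values `val`; safety is automatic. -/
def finModel {W : Type} [Fintype W] [h : Nonempty W] (R : W → W → Prop)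
    [∀ i, DecidablePred (R i)] (val : W → V → α) : KModel α V where
  W := W
  nonempty := h
  R := R
  e u φ := evalF R val φ u
  e_zero _ := rfl
  e_one _ := rfl
  e_and _ _ _ := rfl
  e_or _ _ _ := rfl
  e_mul _ _ _ := rfl
  e_imp _ _ _ := rfl
  e_box u φ := by
    constructor
    · rintro _ ⟨u', hu', rfl⟩
      exact Finset.inf_le (by simpa using hu')
    · exact fun a ha => Finset.le_inf fun u' hu' => ha ⟨u', by simpa using hu', rfl⟩
  e_dia u φ := by
    constructor
    · rintro _ ⟨u', hu', rfl⟩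
      exact Finset.le_sup (f := evalF R val φ) (by simpa using hu')
    · exact fun a ha => Finset.sup_le fun u' hu' => ha ⟨u', by simpa using hu', rfl⟩

/-- A reachable pair as the last term of a finite sequence of pairs starting at `(0, 0)`. -/
theorem reach_sequence {rules : List (ℕ × ℕ × ℕ × ℕ)} {V' W' : ℕ} (h : Reach rules V' W') :
    ∃ (k : ℕ) (a b : ℕ → ℕ), a 0 = 0 ∧ b 0 = 0 ∧ a k = V' ∧ b k = W' ∧
      ∀ j < k, ∃ r ∈ rules, a (j + 1) = r.1 * a j + r.2.1 ∧
        b (j + 1) = r.2.2.1 * b j + r.2.2.2 := by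
  induction h with
  | zero => exact ⟨0, fun _ => 0, fun _ => 0, rfl, rfl, rfl, rfl, fun j hj => absurd hj (by simp)⟩
  | @step p q r s V' W' hr _ ih =>
    obtain ⟨k, a, b, ha, hb, hak, hbk, hj⟩ := ih
    refine ⟨k + 1, fun i => if i ≤ k then a i else p * V' + q,
      fun i => if i ≤ k then b i else r * W' + s, by simp [ha], by simp [hb], by simp, by simp,
      fun j hjk => ?_⟩
    rcases Nat.lt_succ_iff_lt_or_eq.1 hjk with h | rfl
    · obtain ⟨r', h1, h2, h3⟩ := hj j h
      exact ⟨r', h1, by simp [h.le, Nat.succ_le_of_lt h, h2], by simp [h.le, Nat.succ_le_of_lt h, h3]⟩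
    · exact ⟨_, hr, by simp [hak], by simp [hbk]⟩

/-- The model on the strict chain `0 < … < k`, in which a world sees the smaller ones, with
prescribed values at each height `n u`. -/
theorem exists_chainModel (k : ℕ) (val : ℕ → V → α) :
    ∃ (M : KModel α V) (n : M.W → ℕ), M.IsFinite ∧ (∀ u u', M.R u u' ↔ n u' < n u) ∧
      (∀ j ≤ k, ∃ u, n u = j) ∧ (∀ u, n u ≤ k) ∧ ∀ u x, M.e u (.var x) = val (n u) x :=
  ⟨finModel (W := Fin (k + 1)) (fun i j => j < i) fun j x => val j x, fun j : Fin (k + 1) => (j : ℕ),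
    inferInstanceAs (Finite (Fin (k + 1))), fun _ _ => Fin.lt_def,
    fun j hj => ⟨(⟨j, Nat.lt_succ_of_le hj⟩ : Fin (k + 1)), rfl⟩,
    fun j : Fin (k + 1) => Nat.le_of_lt_succ j.is_lt, fun _ _ => rfl⟩

/-- On the chain, a formula with value `c ^ f (j + 1)` at height `j`, `f` monotone and `f 0 = 0`,
has box with value `c ^ f j`: the infimum is attained at height `j - 1`, and is `1` at the
bottom. -/
theorem chain_box (M : KModel α V) {n : M.W → ℕ} {k : ℕ} {c : α}
    (hR : ∀ u u', M.R u u' ↔ n u' < n u) (hsurj : ∀ j ≤ k, ∃ u, n u = j) (hle : ∀ u, n u ≤ k)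
    {ψ : MFormula V} {f : ℕ → ℕ} (h0 : f 0 = 0) (hf : ∀ i j, i ≤ j → j ≤ k → f i ≤ f j)
    (hψ : ∀ u, M.e u ψ = c ^ f (n u + 1)) (u : M.W) : M.e u (.fBox ψ) = c ^ f (n u) := by
  apply le_antisymm
  · rcases hn : n u with _ | i
    · rw [h0, pow_zero]
      exact le_one' _
    · obtain ⟨u', hu'⟩ := hsurj i (by have := hle u; omega)
      have h := M.box_le ((hR u u').2 (by omega)) ψ
      rwa [hψ, hu'] at h
  · refine M.le_box fun u' hu' => ?_
    rw [hψ]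
    exact pow_anti c (hf _ _ ((hR _ _).1 hu') (hle u))

/-- A reachable pair on the line `V' = d + S * W'` is turned into a finite transitive
countermodel over any algebra with an element violating `(V' + W')`-contractivity. World `j` of a
chain carries the pair with index `j + 1` of a generating sequence, so that `□v`, `□w` there carry
the pair with index `j`. -/
theorem exists_countermodel [DecidableEq V] {y v w : V} (hyv : y ≠ v) (hyw : y ≠ w) (hvw : v ≠ w)
    {rules : List (ℕ × ℕ × ℕ × ℕ)}
    (hrules : ∀ a b c e, (a, b, c, e) ∈ rules → 1 ≤ a ∧ 1 ≤ b ∧ 1 ≤ c)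
    {V' W' S d : ℕ} (hd : 1 ≤ d) (hreach : Reach rules V' W') (he : V' = d + S * W')
    {c : α} (hc : c ^ (V' + W' + 1) ≠ c ^ (V' + W')) :
    ∃ (M : KModel α V) (r : M.W), M.IsTrans ∧ M.IsFinite ∧
      (∀ γ ∈ redGamma rules y v w, M.e r γ = 1) ∧ M.e r (redPhi y v w S d) ≠ 1 := by
  obtain ⟨k, a, b, ha, hb, hak, hbk, hj⟩ := reach_sequence hreach
  -- `V' ≥ d ≥ 1` excludes the empty sequence, so the root has a successor and `□y = ◇y = c`
  have hk : 1 ≤ k := by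
    rcases k with _ | k
    · omega
    · omega
  have hmono : ∀ f : ℕ → ℕ, (∀ j < k, f j ≤ f (j + 1)) → ∀ i j, i ≤ j → j ≤ k → f i ≤ f j := by
    intro f hf i j hij
    induction hij with
    | refl => exact fun _ => le_rfl
    | step _ ih => exact fun hk => (ih (by omega)).trans (hf _ (by omega))
  have hma := hmono a fun j hjk => by
    obtain ⟨⟨p, q, r, s⟩, h1, h2, h3⟩ := hj j hjk
    rw [h2]
    have := Nat.mul_le_mul_right (a j) (hrules _ _ _ _ h1).1
    simp only
    omega
  have hmb := hmono b fun j hjk => by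
    obtain ⟨⟨p, q, r, s⟩, h1, h2, h3⟩ := hj j hjk
    rw [h3]
    have := Nat.mul_le_mul_right (b j) (hrules _ _ _ _ h1).2.2
    simp only
    omega
  obtain ⟨M, n, hfin, hR, hsurj, hle, hval⟩ := exists_chainModel k fun j x =>
    if x = v then c ^ a (j + 1) else if x = w then c ^ b (j + 1) else c
  have hv : ∀ u, M.e u (.var v) = c ^ a (n u + 1) := fun u => (hval u v).trans (if_pos rfl)
  have hw : ∀ u, M.e u (.var w) = c ^ b (n u + 1) := fun u =>
    (hval u w).trans ((if_neg hvw.symm).trans (if_pos rfl))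
  have hy : ∀ u, M.e u (.var y) = c := fun u =>
    (hval u y).trans ((if_neg hyv).trans (if_neg hyw))
  have hbv := chain_box M hR hsurj hle ha hma hv
  have hbw := chain_box M hR hsurj hle hb hmb hw
  have hbvw := chain_box M hR hsurj hle (f := fun i => a i + b i) (ψ := .fMul (.var v) (.var w))
    (c := c) (by simp [ha, hb]) (fun i j h h' => add_le_add (hma i j h h') (hmb i j h h'))
    fun u => by rw [pow_add, M.e_mul, hv, hw]
  obtain ⟨r, hr⟩ := hsurj k le_rfl
  obtain ⟨t, ht⟩ := hsurj 0 (Nat.zero_le k)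
  have h0 : M.R r t := (hR r t).2 (by omega)
  have hby : M.e r (.fBox (.var y)) = c :=
    le_antisymm ((M.box_le h0 _).trans (hy t).le) (M.le_box fun u _ => (hy u).ge)
  have hdy : M.e r (.fDia (.var y)) = c :=
    le_antisymm (M.dia_le fun u _ => (hy u).le) ((hy t).ge.trans (M.le_dia h0 _))
  have hsplit : ∀ i, M.e i (splitFormula v w) = 1 := fun i => by
    rw [splitFormula, M.fImp_eq_one, M.e_mul, hbvw, hbv, hbw, pow_add]
  refine ⟨M, r, fun i j l h1 h2 => ?_, hfin, ?_, ?_⟩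
  · rw [hR] at *
    exact h2.trans h1
  · simp only [redGamma, List.mem_cons, List.not_mem_nil, or_false, forall_eq_or_imp, forall_eq]
    refine ⟨?_, ?_, hsplit _, M.box_eq_one.2 fun u _ => hsplit u⟩
    · rw [M.fIff_eq_one, hby, hdy]
    · refine M.box_eq_one.2 fun u hu => ?_
      obtain ⟨ρ, h1, h2, h3⟩ := hj (n u) (hr ▸ (hR r u).1 hu)
      refine M.bigOr_eq_one (List.mem_map_of_mem h1) (M.fAnd_eq_one.2 ⟨?_, ?_⟩)
      · rw [M.fIff_eq_one, M.e_mul, M.e_fPow, M.e_fPow, hv, hbv, hy, h2, pow_add, mul_comm ρ.1,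
          pow_mul]
      · rw [M.fIff_eq_one, M.e_mul, M.e_fPow, M.e_fPow, hw, hbw, hy, h3, pow_add, mul_comm ρ.2.2.1,
          pow_mul]
  · intro h
    rw [redPhi, M.fImp_eq_one] at h
    have h1 : M.e r (.fIff (.fBox (.var v))
        (.fMul (.fPow (.fBox (.var w)) S) (.fPow (.fBox (.var y)) d))) = 1 := by
      rw [M.fIff_eq_one, M.e_mul, M.e_fPow, M.e_fPow, hbv, hbw, hby, hr, hak, hbk,
        ← pow_mul, ← pow_add, he]
      congr 1
      ring
    rw [h1] at h
    have h2 := M.fImp_eq_one.1 (le_antisymm (le_one' _) h)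
    rw [M.e_mul, M.e_mul, M.e_mul, hbv, hbw, hby, hr, hak, hbk, ← pow_add, ← pow_succ] at h2
    exact hc (le_antisymm (pow_anti c (Nat.le_succ _)) h2)

end Counter

/-! ### Computability of the reduction -/

section Assembly

/-- The reduction, for any class of models between the finite transitive and the transitive
ones. -/
theorem localConsequence_iff {I : Type} (A : I → Type) [∀ i, FLew (A i)]
    (hchain : ∀ i, FLew.isChain (A i)) (hwa : ∀ i, FLew.weaklyArchimedean (A i))
    (hnc : ∀ n : ℕ, ∃ i, ¬ FLew.contractive (A i) n) {V : Type} [DecidableEq V]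
    (C : ∀ i, KModel (A i) V → Prop) (hC1 : ∀ i M, C i M → M.IsTrans)
    (hC2 : ∀ i M, M.IsTrans → M.IsFinite → C i M)
    {y v w : V} (hyv : y ≠ v) (hyw : y ≠ w) (hvw : v ≠ w)
    {rules : List (ℕ × ℕ × ℕ × ℕ)}
    (hrules : ∀ a b c e, (a, b, c, e) ∈ rules → 1 ≤ a ∧ 1 ≤ b ∧ 1 ≤ c)
    {S d : ℕ} (hd : 1 ≤ d) :
    LocalConsequence A C (redGamma rules y v w) (redPhi y v w S d) ↔
      ¬ ∃ V' W', Reach rules V' W' ∧ V' = d + S * W' := by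
  constructor
  · rintro h ⟨V', W', h1, h2⟩
    obtain ⟨i, hi⟩ := hnc (V' + W')
    simp only [FLew.contractive, not_forall] at hi
    obtain ⟨c, hc⟩ := hi
    obtain ⟨M, r, g1, g2, g3, g4⟩ := exists_countermodel hyv hyw hvw hrules hd h1 h2 hc
    exact g4 (h i M (hC2 i M g1 g2) r g3)
  · intro h i M hM r hΓ
    by_contra hφ
    exact h (reach_of_countermodel (hchain i) (hwa i) M (hC1 i M hM) r hrules hΓ hφ)

theorem map_fPow {V V' : Type} (f : V → V') (φ : MFormula V) (n : ℕ) :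
    (φ.fPow n).map f = (φ.map f).fPow n := by
  induction n with
  | zero => rfl
  | succ n ih => rw [MFormula.fPow, MFormula.map, ih, MFormula.fPow]

theorem map_bigOr {V V' : Type} (f : V → V') (l : List (MFormula V)) :
    (MFormula.bigOr l).map f = .bigOr (l.map (MFormula.map f)) := by
  induction l with
  | nil => rfl
  | cons φ l ih => rw [MFormula.bigOr, MFormula.map, ih, List.map_cons, MFormula.bigOr]

theorem map_redGamma {V V' : Type} (f : V → V') (rules : List (ℕ × ℕ × ℕ × ℕ)) (y v w : V) :
    (redGamma rules y v w).map (MFormula.map f) = redGamma rules (f y) (f v) (f w) := by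
  have h : MFormula.map f ∘ ruleFormula y v w = ruleFormula (f y) (f v) (f w) := by
    funext r
    simp [ruleFormula, MFormula.map, MFormula.fIff, map_fPow]
  simp [redGamma, MFormula.map, MFormula.fIff, splitFormula, map_bigOr, h]

theorem map_redPhi {V V' : Type} (f : V → V') (y v w : V) (S d : ℕ) :
    (redPhi y v w S d).map f = redPhi (f y) (f v) (f w) S d := by
  simp [redPhi, MFormula.map, MFormula.fIff, map_fPow]

theorem primrec_code_fPow (φ : MFormula ℕ) : Primrec fun n => code (φ.fPow n) := by
  refine (Primrec.nat_rec₁ (f := fun _ a => Nat.pair 5 (Nat.pair a (code φ)))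
    (code (.fOne : MFormula ℕ)) ?_).of_eq fun n => ?_
  · exact Primrec₂.natPair.comp (Primrec.const 5)
      (Primrec₂.natPair.comp Primrec.snd (Primrec.const _))
  · induction n with
    | zero => rfl
    | succ n ih =>
      change _ = Nat.pair 5 (Nat.pair (code (φ.fPow n)) (code φ))
      rw [← ih]

theorem primrec_code_redPhi (y v w : ℕ) {S d : ℕ → ℕ} (hS : Primrec S) (hd : Primrec d) :
    Primrec fun m => code (redPhi y v w (S m) (d m)) := by
  have hp : ∀ (n : ℕ) {f g : ℕ → MFormula ℕ}, Primrec (fun m => code (f m)) →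
      Primrec (fun m => code (g m)) →
      Primrec fun m => Nat.pair n (Nat.pair (code (f m)) (code (g m))) := fun n f g hf hg =>
    Primrec₂.natPair.comp (Primrec.const n) (Primrec₂.natPair.comp hf hg)
  have hc : ∀ φ : MFormula ℕ, Primrec fun _ : ℕ => code φ := fun φ => Primrec.const _
  have hT := hp 5 (f := fun m => .fPow (.fBox (.var w)) (S m))
    (g := fun m => .fPow (.fBox (.var y)) (d m))
    ((primrec_code_fPow _).comp hS) ((primrec_code_fPow _).comp hd)
  let T : ℕ → MFormula ℕ := fun m =>
    .fMul (.fPow (.fBox (.var w)) (S m)) (.fPow (.fBox (.var y)) (d m))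
  have hT' : Primrec fun m => code (T m) := hT
  have h1 := hp 6 (f := fun _ => .fBox (.var v)) (g := T) (hc _) hT'
  have h2 := hp 6 (f := T) (g := fun _ => .fBox (.var v)) hT' (hc _)
  have h3 := hp 5 (f := fun m => .fImp (.fBox (.var v)) (T m))
    (g := fun m => .fImp (T m) (.fBox (.var v))) h1 h2
  exact hp 6 (f := fun m => .fIff (.fBox (.var v)) (T m)) (g := fun _ => _) h3 (hc _)

end Assembly

/-- **Theorem.** For any class `𝒜` of weakly-archimedean linearly ordered FL_ew-algebras
containing, for each `n`, a non-`n`-contractive member, local consequence over the transitive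
safe `𝒜`-Kripke models is undecidable; so is local consequence over the finite transitive
`𝒜`-Kripke models; and already the three-variable fragments of both are undecidable
(no computable function decides the problem on the codes of its instances). -/
theorem transitive_local_consequence_undecidable
    {I : Type} (A : I → Type) [inst : ∀ i, FLew (A i)]
    (hchain : ∀ i, FLew.isChain (A i))
    (hwa : ∀ i, FLew.weaklyArchimedean (A i))
    (hnc : ∀ n : ℕ, ∃ i, ¬ FLew.contractive (A i) n) :
    (¬ ∃ f : ℕ → Bool, Computable f ∧
      ∀ (Γ : List (MFormula ℕ)) (φ : MFormula ℕ),
        (f (codePair Γ φ) = true ↔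
          LocalConsequence A (fun _ M => M.IsTrans) Γ φ)) ∧
    (¬ ∃ f : ℕ → Bool, Computable f ∧
      ∀ (Γ : List (MFormula ℕ)) (φ : MFormula ℕ),
        (f (codePair Γ φ) = true ↔
          LocalConsequence A (fun _ M => M.IsTrans ∧ M.IsFinite) Γ φ)) ∧
    (¬ ∃ f : ℕ → Bool, Computable f ∧
      ∀ (Γ : List (MFormula (Fin 3))) (φ : MFormula (Fin 3)),
        (f (codePair3 Γ φ) = true ↔
          LocalConsequence A (fun _ M => M.IsTrans) Γ φ)) ∧
    (¬ ∃ f : ℕ → Bool, Computable f ∧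
      ∀ (Γ : List (MFormula (Fin 3))) (φ : MFormula (Fin 3)),
        (f (codePair3 Γ φ) = true ↔
          LocalConsequence A (fun _ M => M.IsTrans ∧ M.IsFinite) Γ φ)) := by
  obtain ⟨rules, S, d, hS, hd, hrules, hd1, hund⟩ := exists_arith
  -- the code of the instance attached to `m`, the same for `ℕ` and for three variables
  let G : ℕ → ℕ := fun m =>
    codePair (redGamma rules 0 1 2) (redPhi 0 1 2 (S m) (d m))
  have hG : Computable G := Primrec.to_comp
    (Primrec₂.natPair.comp (Primrec.const _) (primrec_code_redPhi 0 1 2 hS hd))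
  have hG3 : ∀ m, codePair3 (redGamma rules 0 1 2) (redPhi 0 1 2 (S m) (d m)) = G m := by
    intro m
    have h1 := map_redGamma (Fin.val : Fin 3 → ℕ) rules 0 1 2
    have h2 := map_redPhi (Fin.val : Fin 3 → ℕ) 0 1 2 (S m) (d m)
    simp only [G, codePair, codePair3]
    rw [h2, show (fun γ : MFormula (Fin 3) => code (γ.map Fin.val)) =
      code ∘ MFormula.map Fin.val from rfl, ← List.map_map, h1]
    rfl
  -- a decision procedure on these instances would decide the arithmetical problem
  have key : ∀ f : ℕ → Bool, Computable f →
      ¬ ∀ m, (f (G m) = true ↔ ¬ ∃ V W, Reach rules V W ∧ V = d m + S m * W) := by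
    intro f hf h
    refine hund (ComputablePred.computable_iff.2
      ⟨fun m => !f (G m), Primrec.not.to_comp.comp (hf.comp hG), ?_⟩)
    funext m
    have := h m
    rw [eq_iff_iff, Bool.not_eq_true', ← Bool.not_eq_true, this, not_not]
  refine ⟨?_, ?_, ?_, ?_⟩
  · rintro ⟨f, hf, h⟩
    exact key f hf fun m => (h _ _).trans (localConsequence_iff A hchain hwa hnc _
      (fun _ _ h => h) (fun _ _ h _ => h) (by decide) (by decide) (by decide) hrules (hd1 m))
  · rintro ⟨f, hf, h⟩
    exact key f hf fun m => (h _ _).trans (localConsequence_iff A hchain hwa hnc _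
      (fun _ _ h => h.1) (fun _ _ h h' => ⟨h, h'⟩) (by decide) (by decide) (by decide) hrules
      (hd1 m))
  · rintro ⟨f, hf, h⟩
    exact key f hf fun m => hG3 m ▸ (h _ _).trans (localConsequence_iff A hchain hwa hnc _
      (fun _ _ h => h) (fun _ _ h _ => h) (by decide) (by decide) (by decide) hrules (hd1 m))
  · rintro ⟨f, hf, h⟩
    exact key f hf fun m => hG3 m ▸ (h _ _).trans (localConsequence_iff A hchain hwa hnc _
      (fun _ _ h => h.1) (fun _ _ h h' => ⟨h, h'⟩) (by decide) (by decide) (by decide) hrules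
      (hd1 m))
end

section
/- The formulas x ↔ (□x)², □(x ↔ (□x)²), and ¬◇□0 locally entail ¬x ∨ x over the class of transitive Kripke models valued in the finite MV chains: for every n ∈ ℕ, every transitive MV_n-Kripke model M, and every world v, if e(v, x ↔ (□x)²) = e(v, □(x ↔ (□x)²)) = e(v, ¬◇□0) = 1 then e(v, ¬x ∨ x) = 1. -/
/-- A (safe) Kripke model over the standard MV algebra `[0,1]_Ł`: all values lie in
`[0,1] ⊆ ℝ`, the propositional connectives are computed world-wise by the Łukasiewicz
operations, and `□`/`◇` are the infimum/supremum of the values at accessible worlds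
(`1`/`0` when there are none); over `[0,1]` these always exist, so every such model is
safe. -/
structure LukModel (V : Type) where
  W : Type
  nonempty : Nonempty W
  R : W → W → Prop
  e : W → MFormula V → ℝ
  mem01 : ∀ v φ, e v φ ∈ Set.Icc (0 : ℝ) 1
  e_zero : ∀ v, e v .fZero = 0
  e_one : ∀ v, e v .fOne = 1
  e_and : ∀ v φ ψ, e v (.fAnd φ ψ) = min (e v φ) (e v ψ)
  e_or : ∀ v φ ψ, e v (.fOr φ ψ) = max (e v φ) (e v ψ)
  e_mul : ∀ v φ ψ, e v (.fMul φ ψ) = max 0 (e v φ + e v ψ - 1)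
  e_imp : ∀ v φ ψ, e v (.fImp φ ψ) = min 1 (1 - e v φ + e v ψ)
  e_box : ∀ v φ, IsGLB (insert (1 : ℝ) {a | ∃ w, R v w ∧ e w φ = a}) (e v (.fBox φ))
  e_dia : ∀ v φ, IsLUB (insert (0 : ℝ) {a | ∃ w, R v w ∧ e w φ = a}) (e v (.fDia φ))

namespace LukModel

variable {V : Type}

/-- The accessibility relation is transitive. -/
def IsTrans (M : LukModel V) : Prop := ∀ a b c : M.W, M.R a b → M.R b c → M.R a c

/-- A model is witnessed if the value of every `□`- and `◇`-formula at every world is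
attained at some accessible world. -/
def Witnessed (M : LukModel V) : Prop :=
  ∀ (v : M.W) (φ : MFormula V),
    (∃ w, M.R v w ∧ M.e v (.fBox φ) = M.e w φ) ∧
    (∃ w, M.R v w ∧ M.e v (.fDia φ) = M.e w φ)

end LukModel

/-- A Łukasiewicz Kripke model is valued in the finite MV chain `MV_n` when every formula
takes at every world a value of the form `k/n` with `0 ≤ k ≤ n`. -/
def LukModel.ValuedInMV {V : Type} (n : ℕ) (M : LukModel V) : Prop :=
  ∀ (v : M.W) (φ : MFormula V), ∃ k ≤ n, M.e v φ = (k : ℝ) / n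

/-- The premise `x ↔ (□x)²` having value `1`, as an equation between truth values. -/
lemma eq_of_fIff_eq_one (M : LukModel ℕ) (w : M.W)
    (h : M.e w (MFormula.fIff (.var 0) (.fMul (.fBox (.var 0)) (.fBox (.var 0)))) = 1) :
    M.e w (.var 0) = max 0 (2 * M.e w (.fBox (.var 0)) - 1) := by
  rw [MFormula.fIff, M.e_mul, M.e_imp, M.e_imp, M.e_mul] at h
  rw [two_mul]
  generalize max 0 (M.e w (.fBox (.var 0)) + M.e w (.fBox (.var 0)) - 1) = b at h ⊢
  generalize M.e w (.var 0) = a at h ⊢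
  have h₁ := min_le_left 1 (1 - a + b)
  have h₂ := min_le_right 1 (1 - a + b)
  have h₃ := min_le_left 1 (1 - b + a)
  have h₄ := min_le_right 1 (1 - b + a)
  rcases max_choice 0 (min 1 (1 - a + b) + min 1 (1 - b + a) - 1) with h₅ | h₅ <;>
    rw [h₅] at h <;> linarith

lemma box_le_of_rel (M : LukModel ℕ) {w u : M.W} (φ : MFormula ℕ) (hR : M.R w u) :
    M.e w (.fBox φ) ≤ M.e u φ :=
  (M.e_box w φ).1 (Set.mem_insert_of_mem _ ⟨u, hR, rfl⟩)

lemma exists_rel_lt_one (M : LukModel ℕ) (w : M.W) (φ : MFormula ℕ)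
    (h : M.e w (.fBox φ) < 1) : ∃ u, M.R w u ∧ M.e u φ < 1 := by
  by_contra! hc
  refine h.not_ge ((M.e_box w φ).2 ?_)
  rintro a (rfl | ⟨u, hR, rfl⟩)
  · exact le_rfl
  · exact hc u hR

/-- From a world where `x` has a value in `(0, 1)` one can move to a successor where the
value is strictly larger but still below `1`. -/
lemma exists_succ_lt (M : LukModel ℕ) (w : M.W)
    (h : M.e w (.var 0) = max 0 (2 * M.e w (.fBox (.var 0)) - 1))
    (h0 : 0 < M.e w (.var 0)) (h1 : M.e w (.var 0) < 1) :
    ∃ u, M.R w u ∧ M.e w (.var 0) < M.e u (.var 0) ∧ M.e u (.var 0) < 1 := by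
  have hb : M.e w (.var 0) = 2 * M.e w (.fBox (.var 0)) - 1 := by
    rcases max_choice 0 (2 * M.e w (.fBox (.var 0)) - 1) with h' | h' <;>
      rw [h'] at h <;> linarith
  obtain ⟨u, hR, hu⟩ := exists_rel_lt_one M w (.var 0) (by linarith)
  have := box_le_of_rel M (.var 0) hR
  exact ⟨u, hR, by linarith, hu⟩

/-- **Lemma.** Over transitive models valued in a finite MV chain `MV_n`, the premises
`x ↔ (□x)²`, `□(x ↔ (□x)²)`, `¬◇□0` locally entail `¬x ∨ x`. -/
theorem finite_mv_entailment (n : ℕ) (hn : 0 < n)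
    (M : LukModel ℕ) (htrans : M.IsTrans) (hMV : M.ValuedInMV n) (v : M.W)
    (h1 : M.e v (MFormula.fIff (.var 0) (.fMul (.fBox (.var 0)) (.fBox (.var 0)))) = 1)
    (h2 : M.e v (.fBox (MFormula.fIff (.var 0)
      (.fMul (.fBox (.var 0)) (.fBox (.var 0))))) = 1)
    (h3 : M.e v (MFormula.fNeg (.fDia (.fBox .fZero))) = 1) :
    M.e v (.fOr (MFormula.fNeg (.var 0)) (.var 0)) = 1 := by
  have hn' : (0 : ℝ) < n := by exact_mod_cast hn
  have hsucc : ∀ u, M.R v u →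
      M.e u (.var 0) = max 0 (2 * M.e u (.fBox (.var 0)) - 1) := fun u hR =>
    eq_of_fIff_eq_one M u (le_antisymm (M.mem01 _ _).2 (h2 ▸ box_le_of_rel M _ hR))
  -- Induction on a bound for the distance `n * (1 - x)` from the top of the chain.
  have key : ∀ d : ℕ, ∀ w, (w = v ∨ M.R v w) → 0 < M.e w (.var 0) → M.e w (.var 0) < 1 →
      ∀ k : ℕ, M.e w (.var 0) = (k : ℝ) / n → n ≤ k + d → False := by
    intro d
    induction d with
    | zero =>
      intro w _ _ hw1 k hk hd
      rw [hk, div_lt_one hn'] at hw1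
      have : k < n := by exact_mod_cast hw1
      omega
    | succ d ih =>
      intro w hw hw0 hw1 k hk hd
      have hEq : M.e w (.var 0) = max 0 (2 * M.e w (.fBox (.var 0)) - 1) := by
        rcases hw with rfl | hR
        · exact eq_of_fIff_eq_one M _ h1
        · exact hsucc w hR
      obtain ⟨u, hR, hlt, hu1⟩ := exists_succ_lt M w hEq hw0 hw1
      obtain ⟨l, -, hl⟩ := hMV u (.var 0)
      have hkl : k < l := by
        rw [hk, hl, div_lt_div_iff_of_pos_right hn'] at hlt
        exact_mod_cast hlt
      refine ih u (Or.inr ?_) (hw0.trans hlt) hu1 l hl (by omega)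
      rcases hw with rfl | hvw
      · exact hR
      · exact htrans _ _ _ hvw hR
  obtain ⟨k, -, hk⟩ := hMV v (.var 0)
  obtain ⟨hx0, hx1⟩ := M.mem01 v (.var 0)
  rw [M.e_or, MFormula.fNeg, M.e_imp, M.e_zero]
  rcases hx0.eq_or_lt with h | hpos
  · rw [← h]; norm_num
  rcases hx1.eq_or_lt with h | hlt
  · rw [h]; norm_num
  · exact (key n v (Or.inl rfl) hpos hlt k hk (by omega)).elim
end
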